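/- arXiv:1207.7154 — 4 statements merged into one kernel-verified Lean document; each statement's English description precedes it below -/
import Mathlib

section
/- The limit h = lim_{n→∞} (1/n)·log|X_n| exists; for every k ≥ 1 it satisfies (1/(2·(2^k − 1)))·log|Σ_k| ≤ h ≤ (1/(2·(2^k − 1)))·log|Σ_k| + (k/(2·(2^k − 1)))·log 2; and consequently h = lim_{k→∞} (1/(2·(2^k − 1)))·log|Σ_k|. -/
/-!
The set `V_j(3)` is the open integer interval `(2^j, 2^(j+1))`, so `M_k(3)` is the interval
`[2, 2^(k+1))` with the powers of two removed. Fix `b ≥ 1`. Every `m` in `[2b, 2^(k+1) b)` is uniquely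
`c 2^e + r` with `b ≤ c < 2b`, `1 ≤ e ≤ k`, `0 ≤ r < 2^e`; sending it to `2^e + r` identifies the
sites with given `c` and `r > 0` with `M_k(3)`, compatibly with doubling and with successors.
The sites with `r = 0` separate these `b` tiles from one another and from `[1, 2b)`.

Filling the separating sites with zeros (`glue_mem`, `card_lower`), respectively forgetting them
(`pull_mem`, `card_upper`), gives, for `g(N) = log |X_{N-1}|` and `s_k = log |Σ_k|`,
`g(2b) + b s_k ≤ g(2^(k+1) b) ≤ g(2b) + b s_k + b k log 2`.

Iterating this recursion about `log n` times (`growth`) bounds `log |X_n| / n` asymptotically between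
`s_k / (2 (2^k - 1))` and `(s_k + k log 2) / (2 (2^k - 1))`. The width of these bounds
tends to `0` as `k → ∞`, which yields all the claims (`squeeze`).
-/

open Filter Topology

/-- `V_j(l)` (0-indexed: `Vl l 0 = V_1(l) = {l}`). -/
def Vl (l : ℕ) : ℕ → Finset ℕ
  | 0 => {l}
  | j + 1 => (Vl l j).biUnion fun i => {2 * i - 1, 2 * i, 2 * i + 1}

/-- `M_k(l) = V_1(l) ∪ ⋯ ∪ V_k(l)`. -/
def Ml (l k : ℕ) : Finset ℕ := (Finset.range k).biUnion (Vl l)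

/-- `X_n` : functions `x : {1,…,n} → {0,1}` (encoded as functions `ℕ → Fin 2`
vanishing outside `[1,n]`) with `x_k·x_{2k} = 0` whenever `2k ≤ n` and
`A(x_k, x_{k+1}) = 1` whenever `k+1 ≤ n`. -/
def XA (A : Fin 2 → Fin 2 → Fin 2) (n : ℕ) : Set (ℕ → Fin 2) :=
  {x | (∀ k, 1 ≤ k → 2 * k ≤ n → x k * x (2 * k) = 0) ∧
       (∀ k, 1 ≤ k → k + 1 ≤ n → A (x k) (x (k + 1)) = 1) ∧
       (∀ m, m = 0 ∨ n < m → x m = 0)}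

/-- `Σ_k` : functions `y : M_k(3) → {0,1}` with `y_i·y_{2i} = 0` whenever `i, 2i ∈
M_k(3)` and `A(y_i, y_{i+1}) = 1` whenever `i, i+1 ∈ M_k(3)`. -/
def SigA (A : Fin 2 → Fin 2 → Fin 2) (k : ℕ) : Set (ℕ → Fin 2) :=
  {y | (∀ i, i ∈ Ml 3 k → 2 * i ∈ Ml 3 k → y i * y (2 * i) = 0) ∧
       (∀ i, i ∈ Ml 3 k → i + 1 ∈ Ml 3 k → A (y i) (y (i + 1)) = 1) ∧
       (∀ m, m ∉ Ml 3 k → y m = 0)}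

/-! ### Admissible configurations -/

/-- The unconditional form of the constraints: `x_i x_{2i} = 0` and `A(x_i, x_{i+1}) = 1` for
every natural number `i`. Since `A` is `1` as soon as one argument is `0`, a configuration extended
by zero satisfies this exactly when it satisfies the constraints internal to its domain. -/
def Admissible (A : Fin 2 → Fin 2 → Fin 2) (x : ℕ → Fin 2) : Prop :=
  ∀ i, x i * x (2 * i) = 0 ∧ A (x i) (x (i + 1)) = 1

/-- Admissible configurations supported in `T`. -/
def AdmOn (A : Fin 2 → Fin 2 → Fin 2) (T : Set ℕ) : Set (ℕ → Fin 2) :=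
  {x | Admissible A x ∧ ∀ m, m ∉ T → x m = 0}

section Basic

variable {A : Fin 2 → Fin 2 → Fin 2}

/-- A constraint in which one of the two values is `0` holds automatically. -/
lemma admissible_of (hA : ∀ a : Fin 2, A 0 a = 1 ∧ A a 0 = 1) {x : ℕ → Fin 2}
    (h1 : ∀ i, x i ≠ 0 → x (2 * i) ≠ 0 → x i * x (2 * i) = 0)
    (h2 : ∀ i, x i ≠ 0 → x (i + 1) ≠ 0 → A (x i) (x (i + 1)) = 1) : Admissible A x := by
  intro i
  constructor
  · by_cases h : x i = 0
    · rw [h, zero_mul]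
    by_cases h' : x (2 * i) = 0
    · rw [h', mul_zero]
    exact h1 i h h'
  · by_cases h : x i = 0
    · rw [h]; exact (hA _).1
    by_cases h' : x (i + 1) = 0
    · rw [h']; exact (hA _).2
    exact h2 i h h'

open Classical in
/-- Extension by zero of the restriction of `x` to `T`. -/
noncomputable def restr (T : Set ℕ) (x : ℕ → Fin 2) : ℕ → Fin 2 := fun m => if m ∈ T then x m else 0

lemma restr_mem {T : Set ℕ} {m : ℕ} (h : m ∈ T) (x : ℕ → Fin 2) : restr T x m = x m := by
  simp [restr, h]

lemma restr_notMem {T : Set ℕ} {m : ℕ} (h : m ∉ T) (x : ℕ → Fin 2) : restr T x m = 0 := by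
  simp [restr, h]

lemma mem_of_restr_ne {T : Set ℕ} {m : ℕ} {x : ℕ → Fin 2} (h : restr T x m ≠ 0) : m ∈ T := by
  by_contra h'
  exact h (restr_notMem h' x)

lemma restr_admOn (hA : ∀ a : Fin 2, A 0 a = 1 ∧ A a 0 = 1) {x : ℕ → Fin 2} (T : Set ℕ)
    (hx : Admissible A x) : restr T x ∈ AdmOn A T := by
  refine ⟨admissible_of hA ?_ ?_, fun m hm => restr_notMem hm x⟩
  · intro i h h'
    rw [restr_mem (mem_of_restr_ne h), restr_mem (mem_of_restr_ne h')]
    exact (hx i).1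
  · intro i h h'
    rw [restr_mem (mem_of_restr_ne h), restr_mem (mem_of_restr_ne h')]
    exact (hx i).2

/-- Site `0` is its own double, so admissible configurations vanish there. -/
lemma Admissible.zero {x : ℕ → Fin 2} (hx : Admissible A x) : x 0 = 0 := by
  have := (hx 0).1
  simp only [mul_zero] at this
  generalize x 0 = a at *
  revert this
  revert a
  decide

lemma XA_eq (hA : ∀ a : Fin 2, A 0 a = 1 ∧ A a 0 = 1) (n : ℕ) :
    XA A n = AdmOn A (Set.Iio (n + 1)) := by
  ext x
  constructor
  · rintro ⟨h1, h2, h3⟩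
    refine ⟨admissible_of hA ?_ ?_, fun m hm => h3 m (Or.inr (by simp at hm; omega))⟩
    · intro i h h'
      refine h1 i ?_ ?_
      · by_contra hc
        exact h (h3 _ (Or.inl (by omega)))
      · by_contra hc
        exact h' (h3 _ (Or.inr (by omega)))
    · intro i h h'
      refine h2 i ?_ ?_
      · by_contra hc
        exact h (h3 _ (Or.inl (by omega)))
      · by_contra hc
        exact h' (h3 _ (Or.inr (by omega)))
  · rintro ⟨h1, h2⟩
    refine ⟨fun k _ _ => (h1 k).1, fun k _ _ => (h1 k).2, ?_⟩
    rintro m (rfl | hm)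
    · exact h1.zero
    · exact h2 m (by simp; omega)

lemma SigA_eq (hA : ∀ a : Fin 2, A 0 a = 1 ∧ A a 0 = 1) (k : ℕ) :
    SigA A k = AdmOn A (Ml 3 k : Set ℕ) := by
  ext x
  constructor
  · rintro ⟨h1, h2, h3⟩
    have key : ∀ i, x i ≠ 0 → i ∈ Ml 3 k := fun i h => by
      by_contra hc
      exact h (h3 i hc)
    exact ⟨admissible_of hA (fun i h h' => h1 i (key _ h) (key _ h'))
      (fun i h h' => h2 i (key _ h) (key _ h')), fun m hm => h3 m (by simpa using hm)⟩
  · rintro ⟨h1, h2⟩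
    exact ⟨fun k _ _ => (h1 k).1, fun k _ _ => (h1 k).2, fun m hm => h2 m (by simpa using hm)⟩

lemma admOn_finite {T : Set ℕ} (hT : T.Finite) : Finite (AdmOn A T) := by
  have : Finite T := hT
  refine Finite.of_injective (fun (x : AdmOn A T) (t : T) => x.1 t) ?_
  intro x y hxy
  ext1
  funext m
  by_cases hm : m ∈ T
  · exact congrFun hxy ⟨m, hm⟩
  · rw [x.2.2 m hm, y.2.2 m hm]

lemma zero_mem_admOn (hA : ∀ a : Fin 2, A 0 a = 1 ∧ A a 0 = 1) (T : Set ℕ) :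
    (fun _ => 0) ∈ AdmOn A T :=
  ⟨fun _ => ⟨zero_mul _, (hA _).1⟩, fun _ _ => rfl⟩

lemma admOn_card_pos (hA : ∀ a : Fin 2, A 0 a = 1 ∧ A a 0 = 1) {T : Set ℕ} (hT : T.Finite) :
    0 < Nat.card (AdmOn A T) := by
  have := admOn_finite (A := A) hT
  have : Nonempty (AdmOn A T) := ⟨⟨_, zero_mem_admOn hA T⟩⟩
  exact Nat.card_pos

lemma admOn_card_mono {T T' : Set ℕ} (hT : T'.Finite) (h : T ⊆ T') :
    Nat.card (AdmOn A T) ≤ Nat.card (AdmOn A T') := by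
  have := admOn_finite (A := A) hT
  exact Nat.card_mono (Set.toFinite (AdmOn A T'))
    (fun x hx => ⟨hx.1, fun m hm => hx.2 m (fun hc => hm (h hc))⟩)

lemma admOn_card_add (hA : ∀ a : Fin 2, A 0 a = 1 ∧ A a 0 = 1) (N M : ℕ) :
    Nat.card (AdmOn A (Set.Iio (N + M))) ≤ Nat.card (AdmOn A (Set.Iio N)) * 2 ^ M := by
  have := admOn_finite (A := A) (Set.finite_Iio N)
  have h := Nat.card_le_card_of_injective
    (fun x : AdmOn A (Set.Iio (N + M)) =>
      ((⟨restr (Set.Iio N) x.1, restr_admOn hA _ x.2.1⟩, fun j => x.1 (N + j)) :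
        AdmOn A (Set.Iio N) × (Fin M → Fin 2))) ?_
  · simpa [Nat.card_prod] using h
  · intro x y hxy
    simp only [Prod.mk.injEq, Subtype.mk.injEq] at hxy
    obtain ⟨h1, h2⟩ := hxy
    ext1
    funext m
    by_cases hm : m < N
    · have := congrFun h1 m
      rwa [restr_mem (by simpa using hm), restr_mem (by simpa using hm)] at this
    by_cases hm' : m < N + M
    · have := congrFun h2 ⟨m - N, by omega⟩
      simpa [Nat.add_sub_cancel' (not_lt.1 hm)] using this
    · rw [x.2.2 m (by simpa using hm'), y.2.2 m (by simpa using hm')]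

end Basic

/-! ### Tiles -/

lemma Vl_three (j : ℕ) : Vl 3 j = Finset.Ioo (2 ^ (j + 1)) (2 ^ (j + 2)) := by
  induction j with
  | zero => rfl
  | succ j ih =>
    ext m
    rw [Vl, ih]
    have hN : 2 ≤ 2 ^ (j + 1) := by
      rw [pow_succ]; have := Nat.one_le_two_pow (n := j); omega
    have e1 : 2 ^ (j + 2) = 2 * 2 ^ (j + 1) := by ring
    have e3 : 2 ^ (j + 1 + 2) = 4 * 2 ^ (j + 1) := by ring
    rw [e1, e3]
    generalize 2 ^ (j + 1) = N at *
    simp only [Finset.mem_biUnion, Finset.mem_Ioo, Finset.mem_insert, Finset.mem_singleton]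
    constructor
    · rintro ⟨i, hi, h⟩
      omega
    · intro h
      by_cases hm : m + 1 = 4 * N
      · exact ⟨m / 2, by omega, by omega⟩
      · exact ⟨(m + 1) / 2, by omega, by omega⟩

/-- The set `M_k(3)` consists of the integers in `[2, 2^(k+1))` that are not powers of two. -/
lemma mem_Ml {k i : ℕ} :
    i ∈ Ml 3 k ↔ ∃ e r, 1 ≤ e ∧ e ≤ k ∧ 0 < r ∧ r < 2 ^ e ∧ i = 2 ^ e + r := by
  simp only [Ml, Finset.mem_biUnion, Finset.mem_range, Vl_three, Finset.mem_Ioo]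
  constructor
  · rintro ⟨j, hj, h1, h2⟩
    have : 2 ^ (j + 2) = 2 * 2 ^ (j + 1) := by ring
    exact ⟨j + 1, i - 2 ^ (j + 1), by omega, by omega, by omega, by omega, by omega⟩
  · rintro ⟨e, r, h1, h2, h3, h4, rfl⟩
    obtain ⟨j, rfl⟩ : ∃ j, e = j + 1 := ⟨e - 1, by omega⟩
    have : 2 ^ (j + 2) = 2 * 2 ^ (j + 1) := by ring
    exact ⟨j, by omega, by omega, by omega⟩

/-- The level of the site `m` relative to `b`: the exponent `e` with `b 2^e ≤ m < b 2^(e+1)`. -/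
def lev (b m : ℕ) : ℕ := Nat.log 2 (m / b)

/-- The tile of the site `m`, an integer of `[b, 2b)` when `b ≤ m`. -/
def tile (b m : ℕ) : ℕ := m / 2 ^ lev b m

/-- The position of `m` inside its tile, as a site of the reference tile: the leading part
`tile b m` of the binary expansion is replaced by a leading `1`. -/
def pos (b m : ℕ) : ℕ := 2 ^ lev b m + m % 2 ^ lev b m

lemma tile_coords {b c e r : ℕ} (h1 : b ≤ c) (h2 : c < 2 * b) (h3 : r < 2 ^ e) :
    tile b (c * 2 ^ e + r) = c ∧ pos b (c * 2 ^ e + r) = 2 ^ e + r := by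
  have hb : 0 < b := by omega
  have hl : lev b (c * 2 ^ e + r) = e := by
    unfold lev
    apply Nat.log_eq_of_pow_le_of_lt_pow
    · rw [Nat.le_div_iff_mul_le hb]
      nlinarith [Nat.mul_le_mul_right (2 ^ e) h1]
    · rw [Nat.div_lt_iff_lt_mul hb, pow_succ]
      nlinarith [Nat.mul_le_mul_right (2 ^ e) (Nat.succ_le_of_lt h2)]
  unfold tile pos
  rw [hl]
  constructor
  · rw [mul_comm, Nat.mul_add_div (by positivity), Nat.div_eq_of_lt h3, add_zero]
  · rw [mul_comm, Nat.mul_add_mod, Nat.mod_eq_of_lt h3]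

lemma exists_coords {b m : ℕ} (hb : 0 < b) (hm : b ≤ m) :
    ∃ c e r, b ≤ c ∧ c < 2 * b ∧ r < 2 ^ e ∧ m = c * 2 ^ e + r := by
  have h0 : m / b ≠ 0 := by
    have := Nat.div_pos hm hb
    omega
  have h1 : 2 ^ lev b m * b ≤ m := (Nat.le_div_iff_mul_le hb).1 (Nat.pow_log_le_self 2 h0)
  have h2 : m < 2 ^ (lev b m + 1) * b :=
    (Nat.div_lt_iff_lt_mul hb).1 (Nat.lt_pow_succ_log_self one_lt_two _)
  have hp : 0 < 2 ^ lev b m := by positivity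
  refine ⟨m / 2 ^ lev b m, lev b m, m % 2 ^ lev b m, ?_, ?_, Nat.mod_lt _ hp, ?_⟩
  · rw [Nat.le_div_iff_mul_le hp]; linarith
  · rw [Nat.div_lt_iff_lt_mul hp]; rw [pow_succ] at h2; linarith
  · exact (Nat.div_add_mod' _ _).symm

lemma two_pow_notMem_Ml (e k : ℕ) : 2 ^ e ∉ Ml 3 k := by
  rw [mem_Ml]
  rintro ⟨e', r, _, _, h3, h4, h⟩
  have a : 2 ^ e' < 2 ^ e := by omega
  have b : 2 ^ e < 2 ^ (e' + 1) := by rw [pow_succ]; omega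
  have := (Nat.pow_lt_pow_iff_right one_lt_two).1 a
  have := (Nat.pow_lt_pow_iff_right one_lt_two).1 b
  omega

/-! ### Comparing configurations with families of tile configurations -/

section Glue

variable {A : Fin 2 → Fin 2 → Fin 2}

/-- Glues a configuration `x` on `[1, 2b)` with one configuration `Y c` of the reference tile for
each `c ∈ [b, 2b)`. -/
def glue (b : ℕ) (x : ℕ → Fin 2) (Y : ℕ → ℕ → Fin 2) : ℕ → Fin 2 := fun m =>
  if m < 2 * b then x m else Y (tile b m) (pos b m)

lemma glue_coords {b c e r : ℕ} (x : ℕ → Fin 2) (Y : ℕ → ℕ → Fin 2) (h1 : b ≤ c) (h2 : c < 2 * b)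
    (he : 1 ≤ e) (h3 : r < 2 ^ e) : glue b x Y (c * 2 ^ e + r) = Y c (2 ^ e + r) := by
  have : ¬ (c * 2 ^ e + r < 2 * b) := by
    have : 2 ≤ 2 ^ e := by simpa using Nat.pow_le_pow_right two_pos he
    nlinarith
  rw [glue, if_neg this, (tile_coords h1 h2 h3).1, (tile_coords h1 h2 h3).2]

lemma exists_coords' {b m : ℕ} (hb : 0 < b) (hm : 2 * b ≤ m) :
    ∃ c e r, b ≤ c ∧ c < 2 * b ∧ r < 2 ^ e ∧ 1 ≤ e ∧ m = c * 2 ^ e + r := by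
  obtain ⟨c, e, r, h1, h2, h3, h4⟩ := exists_coords hb (by omega : b ≤ m)
  refine ⟨c, e, r, h1, h2, h3, ?_, h4⟩
  by_contra h
  obtain rfl : e = 0 := by omega
  simp at h3 h4
  omega

/-- Distinct tiles do not interact: neighbouring tiles are separated by a site of position a power
of two, where tile configurations vanish; doubling a site of a tile stays in the same tile or leaves
the range, and doubling a site of `[b, 2b)` gives a site of position `2`. -/
lemma glue_mem (hA : ∀ a : Fin 2, A 0 a = 1 ∧ A a 0 = 1) {b k : ℕ} (hb : 0 < b) {x : ℕ → Fin 2}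
    {Y : ℕ → ℕ → Fin 2} (hx : x ∈ AdmOn A (Set.Iio (2 * b)))
    (hY : ∀ c, Y c ∈ AdmOn A (Ml 3 k : Set ℕ)) :
    glue b x Y ∈ AdmOn A (Set.Iio (2 ^ (k + 1) * b)) := by
  have hpow : ∀ c e, Y c (2 ^ e) = 0 := fun c e =>
    (hY c).2 _ (by simpa using two_pow_notMem_Ml e k)
  refine ⟨admissible_of hA ?_ ?_, ?_⟩
  · intro m hm hm'
    by_cases h : 2 * m < 2 * b
    · rw [glue, if_pos (by omega), glue, if_pos h]
      exact (hx.1 m).1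
    by_cases h' : m < 2 * b
    · exfalso
      apply hm'
      have := glue_coords x Y (by omega : b ≤ m) h' le_rfl (by norm_num : 0 < 2 ^ 1)
      rw [show 2 * m = m * 2 ^ 1 + 0 by ring, this]
      exact hpow m 1
    · obtain ⟨c, e, r, h1, h2, h3, h4, rfl⟩ := exists_coords' hb (by omega : 2 * b ≤ m)
      rw [show 2 * (c * 2 ^ e + r) = c * 2 ^ (e + 1) + 2 * r by ring,
        glue_coords x Y h1 h2 h4 h3, glue_coords x Y h1 h2 (by omega) (by rw [pow_succ]; omega),
        show 2 ^ (e + 1) + 2 * r = 2 * (2 ^ e + r) by ring]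
      exact ((hY c).1 _).1
  · intro m hm hm'
    by_cases h : m + 1 < 2 * b
    · rw [glue, if_pos (by omega), glue, if_pos h]
      exact (hx.1 m).2
    obtain ⟨c, e, r, h1, h2, h3, h4, h5⟩ := exists_coords' hb (by omega : 2 * b ≤ m + 1)
    have h6 := glue_coords x Y h1 h2 h4 h3
    rcases Nat.eq_zero_or_pos r with rfl | hr
    · exfalso
      apply hm'
      rw [h5, h6]
      exact hpow c e
    · obtain ⟨s, rfl⟩ : ∃ s, r = s + 1 := ⟨r - 1, by omega⟩
      obtain rfl : m = c * 2 ^ e + s := by omega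
      rw [h5, h6, glue_coords x Y h1 h2 h4 (by omega)]
      exact ((hY c).1 _).2
  · intro m hm
    simp only [Set.mem_Iio, not_lt] at hm
    have h2b : 2 * b ≤ m := by
      have : 1 ≤ 2 ^ k := Nat.one_le_two_pow
      rw [pow_succ] at hm
      nlinarith
    obtain ⟨c, e, r, h1, h2, h3, h4, rfl⟩ := exists_coords' hb h2b
    rw [glue_coords x Y h1 h2 h4 h3]
    apply (hY c).2
    rw [Finset.mem_coe, mem_Ml]
    rintro ⟨e', r', _, he', _, hr', h⟩
    have a1 : 2 ^ e < 2 ^ (k + 1) := by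
      have : 2 ^ (e' + 1) ≤ 2 ^ (k + 1) := Nat.pow_le_pow_right two_pos (by omega)
      rw [pow_succ] at this
      omega
    have a2 : e ≤ k := by
      have := (Nat.pow_lt_pow_iff_right one_lt_two).1 a1
      omega
    have a3 : 2 ^ (e + 1) ≤ 2 ^ (k + 1) := Nat.pow_le_pow_right two_pos (by omega)
    have a4 : (c + 1) * 2 ^ e ≤ 2 * b * 2 ^ e := Nat.mul_le_mul_right _ h2
    have a5 := Nat.mul_le_mul_right b a3
    rw [pow_succ 2 e] at a5
    nlinarith

lemma card_lower (hA : ∀ a : Fin 2, A 0 a = 1 ∧ A a 0 = 1) (b k : ℕ) :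
    Nat.card (AdmOn A (Set.Iio (2 * b))) * Nat.card (AdmOn A (Ml 3 k : Set ℕ)) ^ b ≤
      Nat.card (AdmOn A (Set.Iio (2 ^ (k + 1) * b))) := by
  rcases Nat.eq_zero_or_pos b with rfl | hb
  · simp
  have := admOn_finite (A := A) (Set.finite_Iio (2 ^ (k + 1) * b))
  let Y : (Fin b → AdmOn A (Ml 3 k : Set ℕ)) → ℕ → ℕ → Fin 2 := fun y c =>
    if h : c - b < b then (y ⟨c - b, h⟩).1 else fun _ => 0
  have hY : ∀ y c, Y y c ∈ AdmOn A (Ml 3 k : Set ℕ) := by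
    intro y c
    by_cases h : c - b < b
    · simp only [Y, dif_pos h]; exact (y _).2
    · simp only [Y, dif_neg h]; exact zero_mem_admOn hA _
  have h := Nat.card_le_card_of_injective
    (fun p : AdmOn A (Set.Iio (2 * b)) × (Fin b → AdmOn A (Ml 3 k : Set ℕ)) =>
      (⟨glue b p.1.1 (Y p.2), glue_mem hA hb p.1.2 (hY p.2)⟩ :
        AdmOn A (Set.Iio (2 ^ (k + 1) * b)))) ?_
  · simpa [Nat.card_prod, Nat.card_fun] using h
  · rintro ⟨x, y⟩ ⟨x', y'⟩ hxy
    simp only [Subtype.mk.injEq] at hxy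
    refine Prod.ext ?_ ?_
    · ext1
      funext m
      by_cases hm : m < 2 * b
      · have := congrFun hxy m
        simpa [glue, hm] using this
      · rw [x.2.2 m (by simpa using hm), x'.2.2 m (by simpa using hm)]
    · funext t
      ext1
      funext i
      by_cases hi : i ∈ Ml 3 k
      · obtain ⟨e, r, h1, _, _, h4, rfl⟩ := mem_Ml.1 hi
        have ht := t.2
        have := congrFun hxy ((b + t) * 2 ^ e + r)
        rw [glue_coords _ _ (by omega) (by omega) h1 h4,
          glue_coords _ _ (by omega) (by omega) h1 h4] at this
        simpa [Y] using this
      · exact ((y t).2.2 i (by simpa using hi)).trans ((y' t).2.2 i (by simpa using hi)).symm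

/-- Restriction of `x` to the tile `c`, read on the reference tile. -/
noncomputable def pull (k c : ℕ) (x : ℕ → Fin 2) : ℕ → Fin 2 :=
  restr (Ml 3 k : Set ℕ) (fun i => x (c * 2 ^ Nat.log 2 i + (i - 2 ^ Nat.log 2 i)))

lemma log_two_pow_add {e r : ℕ} (h : r < 2 ^ e) : Nat.log 2 (2 ^ e + r) = e :=
  Nat.log_eq_of_pow_le_of_lt_pow (by omega) (by rw [pow_succ]; omega)

lemma pull_coords {k c e r : ℕ} (x : ℕ → Fin 2) (h1 : 1 ≤ e) (h2 : e ≤ k) (h3 : 0 < r)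
    (h4 : r < 2 ^ e) : pull k c x (2 ^ e + r) = x (c * 2 ^ e + r) := by
  have : 2 ^ e + r ∈ (Ml 3 k : Set ℕ) := by
    rw [Finset.mem_coe]; exact mem_Ml.2 ⟨e, r, h1, h2, h3, h4, rfl⟩
  rw [pull, restr_mem this, log_two_pow_add h4, Nat.add_sub_cancel_left]

lemma pull_mem (hA : ∀ a : Fin 2, A 0 a = 1 ∧ A a 0 = 1) (k c : ℕ) {x : ℕ → Fin 2}
    (hx : Admissible A x) : pull k c x ∈ AdmOn A (Ml 3 k : Set ℕ) := by
  refine ⟨admissible_of hA ?_ ?_, fun m hm => restr_notMem hm _⟩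
  · intro i h h'
    have hi' := mem_of_restr_ne h'
    obtain ⟨e, r, h1, h2, h3, h4, rfl⟩ := mem_Ml.1 (Finset.mem_coe.1 (mem_of_restr_ne h))
    obtain ⟨e', r', g1, g2, g3, g4, g5⟩ := mem_Ml.1 (Finset.mem_coe.1 hi')
    have h5 : 2 * r < 2 ^ (e + 1) := by rw [pow_succ]; omega
    have h6 : 2 * (2 ^ e + r) = 2 ^ (e + 1) + 2 * r := by ring
    have : e' = e + 1 := by
      rw [← log_two_pow_add g4, ← g5, h6, log_two_pow_add h5]
    rw [h6, pull_coords x h1 h2 h3 h4, pull_coords x (by omega) (by omega) (by omega) h5,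
      show c * 2 ^ (e + 1) + 2 * r = 2 * (c * 2 ^ e + r) by ring]
    exact (hx _).1
  · intro i h h'
    have hi' := Finset.mem_coe.1 (mem_of_restr_ne h')
    obtain ⟨e, r, h1, h2, h3, h4, rfl⟩ := mem_Ml.1 (Finset.mem_coe.1 (mem_of_restr_ne h))
    have h5 : r + 1 < 2 ^ e := by
      by_contra hc
      apply two_pow_notMem_Ml (e + 1) k
      rwa [show 2 ^ (e + 1) = 2 ^ e + r + 1 by rw [pow_succ]; omega]
    rw [add_assoc, pull_coords x h1 h2 h3 h4, pull_coords x h1 h2 (by omega) h5, ← add_assoc]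
    exact (hx _).2

lemma card_upper (hA : ∀ a : Fin 2, A 0 a = 1 ∧ A a 0 = 1) (b k : ℕ) :
    Nat.card (AdmOn A (Set.Iio (2 ^ (k + 1) * b))) ≤
      Nat.card (AdmOn A (Set.Iio (2 * b))) *
        (Nat.card (AdmOn A (Ml 3 k : Set ℕ)) ^ b * 2 ^ (b * k)) := by
  rcases Nat.eq_zero_or_pos b with rfl | hb
  · simp
  have := admOn_finite (A := A) (Set.finite_Iio (2 * b))
  have := admOn_finite (A := A) (Ml 3 k).finite_toSet
  -- The last component records the values at the separating sites `c 2^e`, `1 ≤ e ≤ k`.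
  have h := Nat.card_le_card_of_injective
    (fun x : AdmOn A (Set.Iio (2 ^ (k + 1) * b)) =>
      ((⟨restr (Set.Iio (2 * b)) x.1, restr_admOn hA _ x.2.1⟩,
        fun t => ⟨pull k (b + t) x.1, pull_mem hA _ _ x.2.1⟩,
        fun q => x.1 ((b + q.1) * 2 ^ (q.2.1 + 1))) :
        AdmOn A (Set.Iio (2 * b)) × (Fin b → AdmOn A (Ml 3 k : Set ℕ)) ×
          (Fin b × Fin k → Fin 2))) ?_
  · simpa [Nat.card_prod, Nat.card_fun] using h
  · intro x y hxy
    simp only [Prod.mk.injEq, Subtype.mk.injEq] at hxy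
    obtain ⟨g1, g2, g3⟩ := hxy
    ext1
    funext m
    by_cases hm : m < 2 * b
    · have := congrFun g1 m
      rwa [restr_mem (by simpa using hm), restr_mem (by simpa using hm)] at this
    by_cases hm' : m < 2 ^ (k + 1) * b
    · obtain ⟨c, e, r, h1, h2, h3, h4, rfl⟩ := exists_coords' hb (not_lt.1 hm)
      have hek : e < k + 1 := by
        rw [← Nat.pow_lt_pow_iff_right one_lt_two]
        by_contra hc
        have := Nat.mul_le_mul (not_lt.1 hc) h1
        nlinarith
      obtain ⟨t, rfl⟩ : ∃ t, c = b + t := ⟨c - b, by omega⟩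
      rcases Nat.eq_zero_or_pos r with rfl | hr
      · have := congrFun g3 (⟨t, by omega⟩, ⟨e - 1, by omega⟩)
        simpa [Nat.sub_add_cancel h4] using this
      · have := congrFun g2 ⟨t, by omega⟩
        simp only [Subtype.mk.injEq] at this
        have := congrFun this (2 ^ e + r)
        rwa [pull_coords _ h4 (by omega) hr h3, pull_coords _ h4 (by omega) hr h3] at this
    · rw [x.2.2 m (by simpa using hm'), y.2.2 m (by simpa using hm')]

end Glue

/-! ### Asymptotics -/

/-- A superadditivity-type recursion `F n ≥ F a + (a/2) s - C`, where `a = 2⌊n / 2^(k+1)⌋`, forces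
linear growth at rate at least `s / (2 (2^k - 1))`, up to a logarithmic error: the solution
of `L (n - a) = (a/2) s` with `n = 2^k a` is `L = s / (2 (2^k - 1))`, and the recursion is
iterated `O(log n)` times. -/
lemma growth {F : ℕ → ℝ} {k : ℕ} (hk : 1 ≤ k) {s C : ℝ}
    (h : ∀ n : ℕ, F (2 * (n / 2 ^ (k + 1))) + ((n / 2 ^ (k + 1) : ℕ) : ℝ) * s - C ≤ F n) :
    ∃ err : ℕ → ℝ, Tendsto err atTop (nhds 0) ∧
      ∀ n : ℕ, 1 ≤ n → s / (2 * ((2 : ℝ) ^ k - 1)) - err n ≤ F n / n := by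
  set L := s / (2 * ((2 : ℝ) ^ k - 1)) with hL
  have hK : (2 : ℝ) ≤ 2 ^ k := by
    simpa using pow_le_pow_right₀ (by norm_num : (1 : ℝ) ≤ 2) hk
  have hs : s = L * (2 * ((2 : ℝ) ^ k - 1)) := by
    rw [hL]; field_simp [show (2 : ℝ) ^ k - 1 ≠ 0 by linarith]
  set D := max 0 (C + |L| * 2 ^ (k + 1)) with hD
  have hD0 : 0 ≤ D := le_max_left _ _
  have hD1 : C + |L| * 2 ^ (k + 1) ≤ D := le_max_right _ _
  have step : ∀ n : ℕ, F (2 * (n / 2 ^ (k + 1))) - L * ((2 * (n / 2 ^ (k + 1)) : ℕ) : ℝ) - D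
      ≤ F n - L * n := by
    intro n
    have h1 := h n
    set q := n / 2 ^ (k + 1) with hq
    have h2 : (n : ℝ) = 2 ^ (k + 1) * q + ((n % 2 ^ (k + 1) : ℕ) : ℝ) := by
      exact_mod_cast (Nat.div_add_mod n (2 ^ (k + 1))).symm
    have h3 : ((n % 2 ^ (k + 1) : ℕ) : ℝ) ≤ 2 ^ (k + 1) := by
      exact_mod_cast (Nat.mod_lt n (by positivity : 0 < 2 ^ (k + 1))).le
    have h4 : L * ((n % 2 ^ (k + 1) : ℕ) : ℝ) ≤ |L| * 2 ^ (k + 1) :=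
      mul_le_mul (le_abs_self L) h3 (by positivity) (abs_nonneg L)
    rw [hs] at h1
    push_cast
    rw [h2]
    generalize ((n % 2 ^ (k + 1) : ℕ) : ℝ) = ρ at h4
    have h5 : L * ((2 : ℝ) ^ (k + 1) * q + ρ) = q * (L * (2 * (2 ^ k - 1))) + L * (2 * q) + L * ρ := by
      ring
    rw [h5]
    linarith
  have main : ∀ n : ℕ, F 0 - D * (1 + Nat.log 2 n) ≤ F n - L * n := by
    intro n
    induction n using Nat.strong_induction_on with
    | _ n ih =>
      rcases Nat.eq_zero_or_pos n with rfl | hn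
      · simp; linarith
      have h1 := step n
      set q := n / 2 ^ (k + 1) with hq
      have hqn : 2 * q * 2 ≤ n := by
        have h4 : 2 ^ 2 ≤ 2 ^ (k + 1) := Nat.pow_le_pow_right two_pos (by omega)
        have := Nat.mul_div_le n (2 ^ (k + 1))
        rw [← hq] at this
        nlinarith
      rcases Nat.eq_zero_or_pos q with h0 | h0
      · rw [h0] at h1
        have : 0 ≤ D * (Nat.log 2 n : ℝ) := by positivity
        simp at h1
        nlinarith
      · have h2 := ih (2 * q) (by omega)
        have h3 : Nat.log 2 (2 * q) + 1 ≤ Nat.log 2 n := by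
          rw [← Nat.log_mul_base one_lt_two (by omega)]
          exact Nat.log_mono_right hqn
        have h4 : (Nat.log 2 (2 * q) : ℝ) + 1 ≤ Nat.log 2 n := by exact_mod_cast h3
        nlinarith [mul_le_mul_of_nonneg_left h4 hD0]
  refine ⟨fun n => (D * (1 + Real.log n / Real.log 2) - F 0) / n, ?_, ?_⟩
  · have t1 : Tendsto (fun n : ℕ => Real.log n / (n : ℝ)) atTop (nhds 0) :=
      (Real.isLittleO_log_id_atTop.tendsto_div_nhds_zero).comp tendsto_natCast_atTop_atTop
    have t2 : Tendsto (fun n : ℕ => (D - F 0) / (n : ℝ)) atTop (nhds 0) :=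
      tendsto_const_div_atTop_nhds_zero_nat _
    have := t2.add (t1.const_mul (D / Real.log 2))
    simp only [mul_zero, add_zero] at this
    refine this.congr fun n => ?_
    ring
  · intro n hn
    have hn' : (0 : ℝ) < n := by exact_mod_cast hn
    have hlog : (Nat.log 2 n : ℝ) ≤ Real.log n / Real.log 2 := by
      have := Real.natLog_le_logb n 2
      simpa [Real.logb] using this
    have h1 := main n
    have h2 := mul_le_mul_of_nonneg_left hlog hD0
    rw [le_div_iff₀ hn', sub_mul, div_mul_cancel₀ _ hn'.ne']
    nlinarith

/-- Nested two-sided asymptotic bounds whose widths tend to zero force convergence. -/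
lemma squeeze {f L δ : ℕ → ℝ} (hδ : Tendsto δ atTop (nhds 0))
    (hlow : ∀ k, 1 ≤ k → ∃ e : ℕ → ℝ, Tendsto e atTop (nhds 0) ∧ ∀ n, 1 ≤ n → L k - e n ≤ f n)
    (hup : ∀ k, 1 ≤ k → ∃ e : ℕ → ℝ, Tendsto e atTop (nhds 0) ∧
      ∀ n, 1 ≤ n → f n ≤ L k + δ k + e n) :
    ∃ h, Tendsto f atTop (nhds h) ∧ (∀ k, 1 ≤ k → L k ≤ h ∧ h ≤ L k + δ k) ∧
      Tendsto L atTop (nhds h) := by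
  have hLU : ∀ j, 1 ≤ j → ∀ k, 1 ≤ k → L j ≤ L k + δ k := by
    intro j hj k hk
    obtain ⟨e, he, h1⟩ := hlow j hj
    obtain ⟨e', he', h2⟩ := hup k hk
    have t1 := he.const_sub (L j)
    have t2 := he'.const_add (L k + δ k)
    rw [sub_zero] at t1
    rw [add_zero] at t2
    refine le_of_tendsto_of_tendsto t1 t2 ?_
    filter_upwards [eventually_ge_atTop 1] with n hn
    exact (h1 n hn).trans (h2 n hn)
  have hbdd : BddAbove (L '' Set.Ici 1) :=
    ⟨L 1 + δ 1, by rintro _ ⟨j, hj, rfl⟩; exact hLU j hj 1 le_rfl⟩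
  have hne : (L '' Set.Ici 1).Nonempty := ⟨L 1, 1, by simp, rfl⟩
  have hb : ∀ k, 1 ≤ k → L k ≤ sSup (L '' Set.Ici 1) ∧ sSup (L '' Set.Ici 1) ≤ L k + δ k :=
    fun k hk => ⟨le_csSup hbdd ⟨k, hk, rfl⟩,
      csSup_le hne (by rintro _ ⟨j, hj, rfl⟩; exact hLU j hj k hk)⟩
  refine ⟨sSup (L '' Set.Ici 1), ?_, hb, ?_⟩
  · rw [tendsto_order]
    constructor
    · intro a ha
      obtain ⟨_, ⟨k, hk, rfl⟩, hak⟩ := exists_lt_of_lt_csSup hne ha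
      obtain ⟨e, he, h1⟩ := hlow k hk
      filter_upwards [eventually_ge_atTop 1, he.eventually_lt_const (sub_pos.2 hak)] with n hn hn'
      linarith [h1 n hn]
    · intro a ha
      obtain ⟨k, hk', hk⟩ :=
        ((hδ.eventually_lt_const (sub_pos.2 ha)).and (eventually_ge_atTop 1)).exists
      obtain ⟨e, he, h1⟩ := hup k hk
      have := (hb k hk).1
      have hpos : 0 < a - (L k + δ k) := by linarith
      filter_upwards [eventually_ge_atTop 1, he.eventually_lt_const hpos] with n hn hn'
      linarith [h1 n hn]
  · have t := hδ.const_sub (sSup (L '' Set.Ici 1))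
    rw [sub_zero] at t
    refine tendsto_of_tendsto_of_tendsto_of_le_of_le' t tendsto_const_nhds ?_ ?_
    · filter_upwards [eventually_ge_atTop 1] with k hk
      linarith [(hb k hk).2]
    · filter_upwards [eventually_ge_atTop 1] with k hk
      exact (hb k hk).1

/-- The limit `h = lim_{n→∞} (1/n)·log|X_n|` exists; for every
`k ≥ 1` it satisfies
`(1/(2(2^k − 1)))·log|Σ_k| ≤ h ≤ (1/(2(2^k − 1)))·log|Σ_k| + (k/(2(2^k − 1)))·log 2`;
and `h = lim_{k→∞} (1/(2(2^k − 1)))·log|Σ_k|`. -/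
theorem entropy_XA (A : Fin 2 → Fin 2 → Fin 2)
    (hA : ∀ a : Fin 2, A 0 a = 1 ∧ A a 0 = 1) :
    ∃ h : ℝ,
      Tendsto (fun n : ℕ => Real.log (Nat.card (XA A n)) / (n : ℝ)) atTop (nhds h) ∧
      (∀ k : ℕ, 1 ≤ k →
        (1 / (2 * ((2 : ℝ) ^ k - 1))) * Real.log (Nat.card (SigA A k)) ≤ h ∧
        h ≤ (1 / (2 * ((2 : ℝ) ^ k - 1))) * Real.log (Nat.card (SigA A k)) +
          ((k : ℝ) / (2 * ((2 : ℝ) ^ k - 1))) * Real.log 2) ∧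
      Tendsto (fun k : ℕ =>
          (1 / (2 * ((2 : ℝ) ^ k - 1))) * Real.log (Nat.card (SigA A k)))
        atTop (nhds h) := by
  have hlog2 : 0 ≤ Real.log 2 := Real.log_nonneg (by norm_num)
  set G : ℕ → ℝ := fun N => Real.log (Nat.card (AdmOn A (Set.Iio N))) with hG
  have hpos : ∀ N, (0 : ℝ) < Nat.card (AdmOn A (Set.Iio N)) := fun N => by
    exact_mod_cast admOn_card_pos hA (Set.finite_Iio N)
  have hσ : ∀ k, (0 : ℝ) < Nat.card (SigA A k) := fun k => by
    rw [SigA_eq hA]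
    exact_mod_cast admOn_card_pos hA (Ml 3 k).finite_toSet
  have gmono : ∀ N M, N ≤ M → G N ≤ G M := fun N M h =>
    Real.log_le_log (hpos N)
      (by exact_mod_cast admOn_card_mono (Set.finite_Iio M) (Set.Iio_subset_Iio h))
  have gadd : ∀ N M : ℕ, G (N + M) ≤ G N + M * Real.log 2 := by
    intro N M
    have : (Nat.card (AdmOn A (Set.Iio (N + M))) : ℝ) ≤
        Nat.card (AdmOn A (Set.Iio N)) * 2 ^ M := by exact_mod_cast admOn_card_add hA N M
    have := Real.log_le_log (hpos _) this
    rwa [Real.log_mul (hpos N).ne' (by positivity), Real.log_pow] at this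
  have glow : ∀ b k : ℕ, G (2 * b) + b * Real.log (Nat.card (SigA A k)) ≤
      G (2 ^ (k + 1) * b) := by
    intro b k
    have : (Nat.card (AdmOn A (Set.Iio (2 * b))) : ℝ) * (Nat.card (SigA A k) : ℝ) ^ b ≤
        Nat.card (AdmOn A (Set.Iio (2 ^ (k + 1) * b))) := by
      rw [SigA_eq hA]
      exact_mod_cast card_lower hA b k
    have := Real.log_le_log (mul_pos (hpos _) (pow_pos (hσ k) b)) this
    rwa [Real.log_mul (hpos _).ne' (pow_pos (hσ k) b).ne', Real.log_pow] at this
  have gup : ∀ b k : ℕ, G (2 ^ (k + 1) * b) ≤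
      G (2 * b) + (b * Real.log (Nat.card (SigA A k)) + b * k * Real.log 2) := by
    intro b k
    have : (Nat.card (AdmOn A (Set.Iio (2 ^ (k + 1) * b))) : ℝ) ≤
        Nat.card (AdmOn A (Set.Iio (2 * b))) *
          ((Nat.card (SigA A k) : ℝ) ^ b * 2 ^ (b * k)) := by
      rw [SigA_eq hA]
      exact_mod_cast card_upper hA b k
    have := Real.log_le_log (hpos _) this
    rw [Real.log_mul (hpos _).ne' (mul_pos (pow_pos (hσ k) b) (by positivity)).ne',
      Real.log_mul (pow_pos (hσ k) b).ne' (by positivity), Real.log_pow, Real.log_pow] at this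
    push_cast at this
    exact this
  have hX : ∀ n, Real.log (Nat.card (XA A n)) = G (n + 1) := fun n => by rw [XA_eq hA]
  simp only [hX]
  have hdiv : ∀ n k : ℕ, 2 ^ (k + 1) * (n / 2 ^ (k + 1)) ≤ n ∧
      n + 1 ≤ 2 ^ (k + 1) * (n / 2 ^ (k + 1)) + 2 ^ (k + 1) := by
    intro n k
    have h1 := Nat.div_add_mod n (2 ^ (k + 1))
    have h2 := Nat.mod_lt n (by positivity : 0 < 2 ^ (k + 1))
    omega
  refine squeeze (δ := fun k : ℕ => ((k : ℝ) / (2 * ((2 : ℝ) ^ k - 1))) * Real.log 2) ?_ ?_ ?_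
  · -- `k / (2 (2^k - 1)) ≤ k / 2^k` for `k ≥ 1`.
    have t := (tendsto_self_mul_const_pow_of_lt_one (r := (1 / 2 : ℝ)) (by norm_num)
      (by norm_num)).mul_const (Real.log 2)
    rw [zero_mul] at t
    refine tendsto_of_tendsto_of_tendsto_of_le_of_le' tendsto_const_nhds t ?_ ?_
    · filter_upwards with k
      have : (1 : ℝ) ≤ 2 ^ k := one_le_pow₀ (by norm_num)
      have : 0 ≤ 2 * ((2 : ℝ) ^ k - 1) := by linarith
      positivity
    · filter_upwards [eventually_ge_atTop 1] with k hk
      have hK : (2 : ℝ) ≤ 2 ^ k := by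
        simpa using pow_le_pow_right₀ (by norm_num : (1 : ℝ) ≤ 2) hk
      refine mul_le_mul_of_nonneg_right ?_ hlog2
      rw [one_div, inv_pow, ← div_eq_mul_inv]
      exact div_le_div_of_nonneg_left (by positivity) (by positivity) (by linarith)
  · intro k hk
    obtain ⟨e, he, h⟩ := growth (F := fun n => G (n + 1)) hk
      (s := Real.log (Nat.card (SigA A k))) (C := Real.log 2) (fun n => by
        have h1 := gadd (2 * (n / 2 ^ (k + 1))) 1
        have h2 := glow (n / 2 ^ (k + 1)) k
        have h3 := gmono _ (n + 1) ((hdiv n k).1.trans (Nat.le_succ n))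
        push_cast at h1
        linarith)
    refine ⟨e, he, fun n hn => ?_⟩
    have := h n hn
    rwa [one_div_mul_eq_div]
  · intro k hk
    obtain ⟨e, he, h⟩ := growth (F := fun n => - G (n + 1)) hk
      (s := -(Real.log (Nat.card (SigA A k)) + k * Real.log 2))
      (C := 2 ^ (k + 1) * Real.log 2) (fun n => by
        have h1 := gmono (2 * (n / 2 ^ (k + 1))) _ (Nat.le_succ _)
        have h2 := gup (n / 2 ^ (k + 1)) k
        have h3 := gmono _ _ (hdiv n k).2
        have h4 := gadd (2 ^ (k + 1) * (n / 2 ^ (k + 1))) (2 ^ (k + 1))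
        push_cast at h4
        simp only [Nat.succ_eq_add_one] at h1
        linarith)
    refine ⟨e, he, fun n hn => ?_⟩
    have := h n hn
    rw [neg_div, neg_div, add_div] at this
    rw [one_div_mul_eq_div, div_mul_eq_mul_div]
    linarith
end

section
/- For every integer Q ≥ 3, every k ≥ 2, and every integer l ≥ 3, the set M_{Q;k}(l) has exactly Q·(Q^k − 1)/(Q − 1) − k elements. -/
/-!
With `l = m + 1`, each layer is an interval: `V_{Q;j+1}(l)` is the open interval
`(Q^j m, Q^j (m + Q))`, because the blocks `(Q i - Q, Q i + Q)` for consecutive `i` overlap and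
so the blocks over `(A, B)` fill up `(Q A, Q B)`. Hence this layer has `Q^(j+1) - 1` elements.
As `m ≥ 2` and `Q ≥ 2`, we have `m + Q ≤ Q m`, so each layer lies entirely below the next one;
the layers are disjoint, and the cardinality of the union is a geometric sum minus `k`.
-/

/-- `V_{Q;j}(l)` (0-indexed: `VQ Q l 0 = V_{Q;1}(l) = {l, l+1, …, l+Q−2}`,
`VQ Q l (j+1) = {Q·i + r : i ∈ V_{Q;j+1}(l), −(Q−1) ≤ r ≤ Q−1}`). -/
def VQ (Q l : ℕ) : ℕ → Finset ℕ
  | 0 => Finset.Icc l (l + Q - 2)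
  | j + 1 => (VQ Q l j).biUnion fun i => Finset.Icc (Q * i - (Q - 1)) (Q * i + (Q - 1))

/-- `M_{Q;k}(l) = V_{Q;1}(l) ∪ ⋯ ∪ V_{Q;k}(l)`. -/
def MQ (Q l k : ℕ) : Finset ℕ := (Finset.range k).biUnion (VQ Q l)

/-- The blocks `(Q i - Q, Q i + Q)` with `A < i < B` cover exactly `(Q A, Q B)`. The hypothesis
`A + 2 ≤ B` says that there is at least one such `i`. -/
lemma biUnion_blocks (Q A B : ℕ) (hQ : 0 < Q) (hAB : A + 2 ≤ B) :
    ((Finset.Ioo A B).biUnion fun i => Finset.Icc (Q * i - (Q - 1)) (Q * i + (Q - 1))) =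
      Finset.Ioo (Q * A) (Q * B) := by
  ext x
  simp only [Finset.mem_biUnion, Finset.mem_Ioo, Finset.mem_Icc]
  constructor
  · rintro ⟨i, ⟨h1, h2⟩, h3, h4⟩
    have e1 : Q * (A + 1) ≤ Q * i := Nat.mul_le_mul_left _ h1
    have e2 : Q * (i + 1) ≤ Q * B := Nat.mul_le_mul_left _ h2
    rw [Nat.mul_add, Nat.mul_one] at e1 e2
    omega
  · rintro ⟨h1, h2⟩
    have hd : Q * (x / Q) + x % Q = x := Nat.div_add_mod x Q
    have hm : x % Q < Q := Nat.mod_lt x hQ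
    have hB : x / Q < B := Nat.div_lt_of_lt_mul h2
    have hA : A ≤ x / Q := (Nat.le_div_iff_mul_le hQ).2 (by rw [Nat.mul_comm]; exact h1.le)
    -- `x / Q` is the natural witness, except when it equals the excluded endpoint `A`.
    rcases hA.lt_or_eq with h | h
    · exact ⟨x / Q, ⟨h, hB⟩, by omega, by omega⟩
    · rw [← h] at hd
      refine ⟨A + 1, ⟨by omega, by omega⟩, ?_, ?_⟩ <;> rw [Nat.mul_add, Nat.mul_one] <;> omega

lemma VQ_eq_Ioo (Q m : ℕ) (hQ : 3 ≤ Q) (j : ℕ) :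
    VQ Q (m + 1) j = Finset.Ioo (Q ^ j * m) (Q ^ j * (m + Q)) := by
  induction j with
  | zero =>
    ext x
    simp only [VQ, Finset.mem_Icc, Finset.mem_Ioo, pow_zero, one_mul]
    omega
  | succ j ih =>
    have hp : 1 ≤ Q ^ j := Nat.one_le_pow _ _ (by omega)
    rw [VQ, ih, biUnion_blocks Q _ _ (by omega) (by nlinarith)]
    congr 1 <;> ring

/-- The upper end of each layer is at most the lower end of every later one. -/
lemma upper_le_lower (Q m : ℕ) (hQ : 3 ≤ Q) (hm : 2 ≤ m) {i j : ℕ} (hij : i < j) :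
    Q ^ i * (m + Q) ≤ Q ^ j * m := by
  calc Q ^ i * (m + Q) ≤ Q ^ i * (Q * m) := Nat.mul_le_mul_left _ (by nlinarith)
    _ = Q ^ (i + 1) * m := by ring
    _ ≤ Q ^ j * m := Nat.mul_le_mul_right _ (Nat.pow_le_pow_right (by omega) hij)

lemma card_VQ (Q m : ℕ) (hQ : 3 ≤ Q) (j : ℕ) :
    (VQ Q (m + 1) j).card = Q ^ (j + 1) - 1 := by
  rw [VQ_eq_Ioo Q m hQ, Nat.card_Ioo, Nat.mul_add, Nat.add_sub_cancel_left, pow_succ]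

lemma disjoint_VQ (Q m : ℕ) (hQ : 3 ≤ Q) (hm : 2 ≤ m) {i j : ℕ} (hij : i < j) :
    Disjoint (VQ Q (m + 1) i) (VQ Q (m + 1) j) := by
  rw [VQ_eq_Ioo Q m hQ, VQ_eq_Ioo Q m hQ, Finset.disjoint_left]
  intro x hx hy
  rw [Finset.mem_Ioo] at hx hy
  have := upper_le_lower Q m hQ hm hij
  omega

/-- For every `Q ≥ 3`, `k ≥ 2` and `l ≥ 3`, the set `M_{Q;k}(l)`
has exactly `Q·(Q^k − 1)/(Q − 1) − k` elements. -/
theorem card_MQ (Q k l : ℕ) (hQ : 3 ≤ Q) (hk : 2 ≤ k) (hl : 3 ≤ l) :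
    (MQ Q l k).card = Q * (Q ^ k - 1) / (Q - 1) - k := by
  obtain ⟨m, rfl⟩ : ∃ m, l = m + 1 := ⟨l - 1, by omega⟩
  have hdisj : ∀ i ∈ Finset.range k, ∀ j ∈ Finset.range k, i ≠ j →
      Disjoint (VQ Q (m + 1) i) (VQ Q (m + 1) j) := by
    intro i _ j _ hij
    rcases lt_or_gt_of_ne hij with h | h
    · exact disjoint_VQ Q m hQ (by omega) h
    · exact (disjoint_VQ Q m hQ (by omega) h).symm
  rw [MQ, Finset.card_biUnion hdisj, Finset.sum_congr rfl fun j _ => card_VQ Q m hQ j]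
  have hsum : ∑ j ∈ Finset.range k, (Q ^ (j + 1) - 1) + k =
      Q * ∑ j ∈ Finset.range k, Q ^ j := by
    rw [Finset.mul_sum]
    have hk' : k = ∑ _j ∈ Finset.range k, 1 := by simp
    nth_rewrite 2 [hk']
    rw [← Finset.sum_add_distrib]
    refine Finset.sum_congr rfl fun j _ => ?_
    rw [Nat.sub_add_cancel (Nat.one_le_pow _ _ (by omega)), pow_succ, Nat.mul_comm]
  have hgeom : Q ^ k - 1 = (Q - 1) * ∑ j ∈ Finset.range k, Q ^ j := by
    have h := Nat.geomSum_eq (m := Q) (by omega) k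
    rw [h, Nat.mul_div_cancel' (by simpa using Nat.sub_dvd_pow_sub_pow Q 1 k)]
  rw [hgeom, Nat.mul_left_comm, Nat.mul_div_cancel_left _ (by omega), ← hsum,
    Nat.add_sub_cancel]
end

section
/- The limit h = lim_{n→∞} (1/n)·log|X_n(N,C)| exists; for every k ≥ 2 it satisfies ((Q−1)/(Q·(Q^k − 1)))·log|Σ_k(Q;A;N,C)| ≤ h ≤ ((Q−1)/(Q·(Q^k − 1)))·(log|Σ_k(Q;A;N,C)| + k·log N); and consequently h = lim_{k→∞} ((Q−1)/(Q·(Q^k − 1)))·log|Σ_k(Q;A;N,C)|. -/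
/-! # Entropy of multiplicative-additive integer systems

For a finite set `F` of positive integers let `config F` be the set of admissible configurations
supported on `F`, and `w F` (`logCount`) the logarithm of its cardinality. Since the symbol `0` is
compatible with everything, `w` is monotone (extend by `0`), subadditive (restrict), at most
`|F| log N`, and additive over sets that share no constraint.

For `m ≥ 1` the set `block Q m k = ⋃_{1 ≤ j ≤ k} (m Q^j, (m+1) Q^j)` carries the same constraints
as `block Q 1 k`, which is `M_{Q;k}(Q+1)`. For `a ≤ m < aQ` these blocks are pairwise
noninteracting, do not interact with `[1, aQ)`, and together with the points `m Q^j` they fill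
`[aQ, a Q^(k+1))`. Hence, with `P n = log |X_n|`, `S = log |Σ_k|` and `a = ⌊n / Q^(k+1)⌋`,

`a (Q-1) S - O(1) ≤ P n - P ⌊n / Q^k⌋ ≤ a (Q-1) (S + k log N) + O(1)`.

So `P n - c n` with `c = (Q-1)/(Q(Q^k-1)) * S` (resp. with `S + k log N` in place of `S`) decreases
(resp. increases) by a bounded amount from `⌊n / Q^k⌋` to `n`, and iterating bounds it by
`O(log n)` from below (resp. above). This traps the lower and upper limits of `P n / n` between
bounds whose gap, `(Q-1) k log N / (Q(Q^k-1))`, tends to `0` as `k → ∞`. -/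

open Filter Topology

/-- `X_n(N,C)` : functions `x : {1,…,n} → {0,…,N−1}` (encoded as functions `ℕ → ℕ`
with values `< N`, vanishing outside `[1,n]`) with `x_k·x_{Qk} ∈ C` whenever
`Q·k ≤ n` and `A(x_k, x_{k+1}) = 1` whenever `k+1 ≤ n`. -/
def XQANC (Q : ℕ) (A : ℕ → ℕ → ℕ) (N : ℕ) (C : Set ℕ) (n : ℕ) : Set (ℕ → ℕ) :=
  {x | (∀ m, x m < N) ∧
       (∀ k, 1 ≤ k → Q * k ≤ n → x k * x (Q * k) ∈ C) ∧
       (∀ k, 1 ≤ k → k + 1 ≤ n → A (x k) (x (k + 1)) = 1) ∧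
       (∀ m, m = 0 ∨ n < m → x m = 0)}

/-- `Σ_k(Q;A;N,C)` : functions `y : M_{Q;k}(Q+1) → {0,…,N−1}` with
`y_i·y_{Qi} ∈ C` whenever `i, Q·i ∈ M_{Q;k}(Q+1)` and `A(y_i, y_{i+1}) = 1`
whenever `i, i+1 ∈ M_{Q;k}(Q+1)`. -/
def SigQANC (Q : ℕ) (A : ℕ → ℕ → ℕ) (N : ℕ) (C : Set ℕ) (k : ℕ) : Set (ℕ → ℕ) :=
  {y | (∀ m, y m < N) ∧
       (∀ i, i ∈ MQ Q (Q + 1) k → Q * i ∈ MQ Q (Q + 1) k → y i * y (Q * i) ∈ C) ∧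
       (∀ i, i ∈ MQ Q (Q + 1) k → i + 1 ∈ MQ Q (Q + 1) k → A (y i) (y (i + 1)) = 1) ∧
       (∀ m, m ∉ MQ Q (Q + 1) k → y m = 0)}

namespace QEntropy

/-! ### Configurations on a finite set -/

/-- Configurations with symbols `< N` supported on `F`, subject to those constraints both of whose
sites lie in `F`. -/
def config (Q : ℕ) (A : ℕ → ℕ → ℕ) (N : ℕ) (C : Set ℕ) (F : Finset ℕ) : Set (ℕ → ℕ) :=
  {y | (∀ m, y m < N) ∧
       (∀ i, i ∈ F → Q * i ∈ F → y i * y (Q * i) ∈ C) ∧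
       (∀ i, i ∈ F → i + 1 ∈ F → A (y i) (y (i + 1)) = 1) ∧
       (∀ m, m ∉ F → y m = 0)}

/-- The logarithm of the number of configurations on `F`. -/
noncomputable def logCount (Q : ℕ) (A : ℕ → ℕ → ℕ) (N : ℕ) (C : Set ℕ) (F : Finset ℕ) : ℝ :=
  Real.log (Nat.card (config Q A N C F))

section Config

variable {Q N : ℕ} {C : Set ℕ} {A : ℕ → ℕ → ℕ}

/-- A configuration is determined by its values on `F`, read in `Fin N`. -/
lemma toFin_injective (F : Finset ℕ) :
    Function.Injective (fun (x : config Q A N C F) (i : F) => (⟨x.1 i, x.2.1 i⟩ : Fin N)) := by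
  intro x y h
  ext i
  by_cases hi : i ∈ F
  · have := congrFun h ⟨i, hi⟩
    simpa using this
  · rw [x.2.2.2.2 i hi, y.2.2.2.2 i hi]

instance finite_config (F : Finset ℕ) : Finite (config Q A N C F) :=
  Finite.of_injective _ (toFin_injective F)

lemma card_config_le (F : Finset ℕ) : Nat.card (config Q A N C F) ≤ N ^ F.card := by
  have := Nat.card_le_card_of_injective _ (toFin_injective (Q := Q) (A := A) (N := N) (C := C) F)
  simpa using this

lemma zero_mem_config (hN : 2 ≤ N) (hC : 0 ∈ C) (hA : ∀ a : ℕ, a < N → A 0 a = 1 ∧ A a 0 = 1)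
    (F : Finset ℕ) : (fun _ => 0) ∈ config Q A N C F :=
  ⟨fun _ => by lia, fun _ _ _ => by simpa using hC, fun _ _ _ => (hA 0 (by lia)).1,
    fun _ _ => rfl⟩

lemma card_config_pos (hN : 2 ≤ N) (hC : 0 ∈ C) (hA : ∀ a : ℕ, a < N → A 0 a = 1 ∧ A a 0 = 1)
    (F : Finset ℕ) : 0 < Nat.card (config Q A N C F) :=
  have : Nonempty (config Q A N C F) := ⟨⟨_, zero_mem_config hN hC hA F⟩⟩
  Nat.card_pos

lemma logCount_nonneg (F : Finset ℕ) : 0 ≤ logCount Q A N C F := Real.log_natCast_nonneg _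

lemma logCount_le_card (hN : 2 ≤ N) (hC : 0 ∈ C)
    (hA : ∀ a : ℕ, a < N → A 0 a = 1 ∧ A a 0 = 1) (F : Finset ℕ) :
    logCount Q A N C F ≤ F.card * Real.log N := by
  rw [logCount, ← Real.log_pow]
  apply Real.log_le_log
  · exact_mod_cast card_config_pos hN hC hA F
  · exact_mod_cast card_config_le F

/-- Configurations on `F` are, as they vanish elsewhere, also configurations on any larger set. -/
lemma config_mono (hC : 0 ∈ C) (hA : ∀ a : ℕ, a < N → A 0 a = 1 ∧ A a 0 = 1)
    {F G : Finset ℕ} (h : F ⊆ G) : config Q A N C F ⊆ config Q A N C G := by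
  rintro x ⟨h1, h2, h3, h4⟩
  refine ⟨h1, fun i _ _ => ?_, fun i _ _ => ?_, fun i hi => h4 i fun h' => hi (h h')⟩
  · by_cases a : i ∈ F
    · by_cases b : Q * i ∈ F
      · exact h2 i a b
      · simpa [h4 _ b] using hC
    · simpa [h4 _ a] using hC
  · by_cases a : i ∈ F
    · by_cases b : i + 1 ∈ F
      · exact h3 i a b
      · rw [h4 _ b]; exact (hA _ (h1 _)).2
    · rw [h4 _ a]; exact (hA _ (h1 _)).1

lemma logCount_mono (hN : 2 ≤ N) (hC : 0 ∈ C)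
    (hA : ∀ a : ℕ, a < N → A 0 a = 1 ∧ A a 0 = 1) {F G : Finset ℕ} (h : F ⊆ G) :
    logCount Q A N C F ≤ logCount Q A N C G := by
  apply Real.log_le_log
  · exact_mod_cast card_config_pos hN hC hA F
  · exact_mod_cast Nat.card_mono (Set.toFinite (config Q A N C G)) (config_mono hC hA h)

/-- The restriction of `x` to `F`, extended by zero. -/
def restrict (F : Finset ℕ) (x : ℕ → ℕ) : ℕ → ℕ := fun i => if i ∈ F then x i else 0

lemma restrict_mem {F G : Finset ℕ} (h : F ⊆ G) {x : ℕ → ℕ}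
    (hx : x ∈ config Q A N C G) : restrict F x ∈ config Q A N C F := by
  obtain ⟨h1, h2, h3, h4⟩ := hx
  refine ⟨fun i => ?_, fun i a b => ?_, fun i a b => ?_, fun i hi => ?_⟩
  · have := h1 i
    unfold restrict; split_ifs <;> lia
  · simpa [restrict, a, b] using h2 i (h a) (h b)
  · simpa [restrict, a, b] using h3 i (h a) (h b)
  · simp [restrict, hi]

lemma logCount_union_le (hN : 2 ≤ N) (hC : 0 ∈ C)
    (hA : ∀ a : ℕ, a < N → A 0 a = 1 ∧ A a 0 = 1) (F G : Finset ℕ) :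
    logCount Q A N C (F ∪ G) ≤ logCount Q A N C F + logCount Q A N C G := by
  have hp := card_config_pos (Q := Q) hN hC hA
  unfold logCount
  rw [← Real.log_mul (by exact_mod_cast (hp F).ne') (by exact_mod_cast (hp G).ne')]
  apply Real.log_le_log
  · exact_mod_cast hp _
  rw [← Nat.cast_mul, Nat.cast_le, ← Nat.card_prod]
  apply Nat.card_le_card_of_injective
    (fun x : config Q A N C (F ∪ G) =>
      ((⟨restrict F x.1, restrict_mem Finset.subset_union_left x.2⟩ : config Q A N C F),
       (⟨restrict G x.1, restrict_mem Finset.subset_union_right x.2⟩ : config Q A N C G)))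
  intro x y h
  simp only [Prod.mk.injEq, Subtype.mk.injEq] at h
  ext i
  have h1 := congrFun h.1 i
  have h2 := congrFun h.2 i
  by_cases a : i ∈ F
  · simpa [restrict, a] using h1
  by_cases b : i ∈ G
  · simpa [restrict, b] using h2
  rw [x.2.2.2.2 i (by simp [a, b]), y.2.2.2.2 i (by simp [a, b])]

/-- `F` and `G` are disjoint and no constraint involves both a site of `F` and a site of `G`. -/
structure Separated (Q : ℕ) (F G : Finset ℕ) : Prop where
  disj : ∀ i ∈ F, i ∉ G
  mul_left : ∀ i ∈ F, Q * i ∉ G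
  mul_right : ∀ i ∈ G, Q * i ∉ F
  succ_left : ∀ i ∈ F, i + 1 ∉ G
  succ_right : ∀ i ∈ G, i + 1 ∉ F

lemma le_logCount_union (hN : 2 ≤ N) (hC : 0 ∈ C)
    (hA : ∀ a : ℕ, a < N → A 0 a = 1 ∧ A a 0 = 1) {F G : Finset ℕ} (hFG : Separated Q F G) :
    logCount Q A N C F + logCount Q A N C G ≤ logCount Q A N C (F ∪ G) := by
  have hp := card_config_pos (Q := Q) hN hC hA
  have disj' : ∀ i ∈ G, i ∉ F := fun i hi hi' => hFG.disj i hi' hi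
  unfold logCount
  rw [← Real.log_mul (by exact_mod_cast (hp F).ne') (by exact_mod_cast (hp G).ne')]
  apply Real.log_le_log
  · exact_mod_cast Nat.mul_pos (hp F) (hp G)
  rw [← Nat.cast_mul, Nat.cast_le, ← Nat.card_prod]
  have key : ∀ p : config Q A N C F × config Q A N C G,
      (fun i => p.1.1 i + p.2.1 i) ∈ config Q A N C (F ∪ G) := by
    rintro ⟨⟨x, x1, x2, x3, x4⟩, ⟨y, y1, y2, y3, y4⟩⟩
    refine ⟨fun i => ?_, fun i a b => ?_, fun i a b => ?_, fun i hi => ?_⟩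
    · by_cases a : i ∈ F
      · simpa [y4 i (hFG.disj i a)] using x1 i
      · simpa [x4 i a] using y1 i
    · dsimp only
      rcases Finset.mem_union.1 a with a | a
      · have b' := (Finset.mem_union.1 b).resolve_right (hFG.mul_left i a)
        simpa [y4 _ (hFG.disj _ a), y4 _ (hFG.disj _ b')] using x2 i a b'
      · have b' := (Finset.mem_union.1 b).resolve_left (hFG.mul_right i a)
        simpa [x4 _ (disj' _ a), x4 _ (disj' _ b')] using y2 i a b'
    · dsimp only
      rcases Finset.mem_union.1 a with a | a
      · have b' := (Finset.mem_union.1 b).resolve_right (hFG.succ_left i a)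
        simpa [y4 _ (hFG.disj _ a), y4 _ (hFG.disj _ b')] using x3 i a b'
      · have b' := (Finset.mem_union.1 b).resolve_left (hFG.succ_right i a)
        simpa [x4 _ (disj' _ a), x4 _ (disj' _ b')] using y3 i a b'
    · simp only [Finset.mem_union, not_or] at hi
      simp [x4 i hi.1, y4 i hi.2]
  apply Nat.card_le_card_of_injective
    (fun p => (⟨_, key p⟩ : config Q A N C (F ∪ G)))
  rintro ⟨x, y⟩ ⟨x', y'⟩ h
  simp only [Subtype.mk.injEq] at h
  have hx : x = x' := by
    ext i
    by_cases a : i ∈ F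
    · simpa [y.2.2.2.2 i (hFG.disj i a), y'.2.2.2.2 i (hFG.disj i a)] using congrFun h i
    · rw [x.2.2.2.2 i a, x'.2.2.2.2 i a]
  subst hx
  have hy : y = y' := by
    ext i
    simpa using congrFun h i
  rw [hy]

lemma logCount_union_biUnion_le (hN : 2 ≤ N) (hC : 0 ∈ C)
    (hA : ∀ a : ℕ, a < N → A 0 a = 1 ∧ A a 0 = 1) (F : Finset ℕ) (T : Finset ℕ)
    (G : ℕ → Finset ℕ) :
    logCount Q A N C (F ∪ T.biUnion G) ≤
      logCount Q A N C F + ∑ m ∈ T, logCount Q A N C (G m) := by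
  induction T using Finset.induction_on with
  | empty => simp
  | insert m T hm ih =>
    rw [Finset.biUnion_insert, Finset.sum_insert hm,
      show F ∪ (G m ∪ T.biUnion G) = G m ∪ (F ∪ T.biUnion G) from Finset.union_left_comm _ _ _]
    linarith [logCount_union_le (Q := Q) hN hC hA (G m) (F ∪ T.biUnion G)]

lemma le_logCount_union_biUnion (hN : 2 ≤ N) (hC : 0 ∈ C)
    (hA : ∀ a : ℕ, a < N → A 0 a = 1 ∧ A a 0 = 1) (F : Finset ℕ) (T : Finset ℕ)
    (G : ℕ → Finset ℕ) (hF : ∀ m ∈ T, Separated Q (G m) F)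
    (hG : ∀ m ∈ T, ∀ m' ∈ T, m ≠ m' → Separated Q (G m) (G m')) :
    logCount Q A N C F + ∑ m ∈ T, logCount Q A N C (G m) ≤
      logCount Q A N C (F ∪ T.biUnion G) := by
  induction T using Finset.induction_on with
  | empty => simp
  | insert m T hm ih =>
    rw [Finset.biUnion_insert, Finset.sum_insert hm,
      show F ∪ (G m ∪ T.biUnion G) = G m ∪ (F ∪ T.biUnion G) from Finset.union_left_comm _ _ _]
    have ih' := ih (fun m' h => hF m' (Finset.mem_insert_of_mem h))
      (fun m' h m'' h' => hG m' (Finset.mem_insert_of_mem h) m'' (Finset.mem_insert_of_mem h'))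
    have hs : Separated Q (G m) (F ∪ T.biUnion G) := by
      have hf := hF m (Finset.mem_insert_self _ _)
      have hg : ∀ m' ∈ T, Separated Q (G m) (G m') := fun m' h =>
        hG m (Finset.mem_insert_self _ _) m' (Finset.mem_insert_of_mem h)
          (by rintro rfl; exact hm h)
      constructor
      · intro i hi
        simp only [Finset.mem_union, Finset.mem_biUnion, not_or, not_exists, not_and]
        exact ⟨hf.disj i hi, fun m' h => (hg m' h).disj i hi⟩
      · intro i hi
        simp only [Finset.mem_union, Finset.mem_biUnion, not_or, not_exists, not_and]
        exact ⟨hf.mul_left i hi, fun m' h => (hg m' h).mul_left i hi⟩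
      · intro i hi
        simp only [Finset.mem_union, Finset.mem_biUnion] at hi
        rcases hi with hi | ⟨m', h, hi⟩
        · exact hf.mul_right i hi
        · exact (hg m' h).mul_right i hi
      · intro i hi
        simp only [Finset.mem_union, Finset.mem_biUnion, not_or, not_exists, not_and]
        exact ⟨hf.succ_left i hi, fun m' h => (hg m' h).succ_left i hi⟩
      · intro i hi
        simp only [Finset.mem_union, Finset.mem_biUnion] at hi
        rcases hi with hi | ⟨m', h, hi⟩
        · exact hf.succ_right i hi
        · exact (hg m' h).succ_right i hi
    linarith [le_logCount_union hN hC hA hs]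

/-- Pulling configurations back along a surjection `φ : G → F` that respects `i ↦ i + 1` and
`i ↦ Q * i` is injective, and produces configurations on `G`. -/
lemma logCount_le_of_pullback (hN : 2 ≤ N) (hC : 0 ∈ C)
    (hA : ∀ a : ℕ, a < N → A 0 a = 1 ∧ A a 0 = 1) {F G : Finset ℕ} (φ : ℕ → ℕ)
    (hφ : ∀ i ∈ G, φ i ∈ F) (hsurj : ∀ i ∈ F, ∃ i' ∈ G, φ i' = i)
    (hmul : ∀ i ∈ G, Q * i ∈ G → φ (Q * i) = Q * φ i)
    (hsucc : ∀ i ∈ G, i + 1 ∈ G → φ (i + 1) = φ i + 1) :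
    logCount Q A N C F ≤ logCount Q A N C G := by
  apply Real.log_le_log
  · exact_mod_cast card_config_pos hN hC hA F
  rw [Nat.cast_le]
  have key : ∀ y : config Q A N C F, restrict G (fun i => y.1 (φ i)) ∈ config Q A N C G := by
    rintro ⟨y, y1, y2, y3, y4⟩
    refine ⟨fun i => ?_, fun i a b => ?_, fun i a b => ?_, fun i hi => ?_⟩
    · have := y1 (φ i)
      unfold restrict; split_ifs
      · exact this
      · lia
    · have hb := hφ _ b
      rw [hmul i a b] at hb
      simpa [restrict, a, b, hmul i a b] using y2 (φ i) (hφ i a) hb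
    · have hb := hφ _ b
      rw [hsucc i a b] at hb
      simpa [restrict, a, b, hsucc i a b] using y3 (φ i) (hφ i a) hb
    · simp [restrict, hi]
  apply Nat.card_le_card_of_injective (fun y => (⟨_, key y⟩ : config Q A N C G))
  intro x y h
  simp only [Subtype.mk.injEq] at h
  ext i
  by_cases hi : i ∈ F
  · obtain ⟨i', hi', rfl⟩ := hsurj i hi
    simpa [restrict, hi'] using congrFun h i'
  · rw [x.2.2.2.2 i hi, y.2.2.2.2 i hi]

end Config

/-! ### Blocks -/

/-- The union of the open intervals `(m Q^j, (m+1) Q^j)` for `1 ≤ j ≤ k`. -/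
def block (Q m k : ℕ) : Finset ℕ :=
  (Finset.Icc 1 k).biUnion fun j => Finset.Ioo (m * Q ^ j) ((m + 1) * Q ^ j)

lemma mem_block {Q m k i : ℕ} :
    i ∈ block Q m k ↔ ∃ j, (1 ≤ j ∧ j ≤ k) ∧ m * Q ^ j < i ∧ i < (m + 1) * Q ^ j := by
  simp [block]

lemma mem_block' {Q m k i : ℕ} :
    i ∈ block Q m k ↔ ∃ j r, (1 ≤ j ∧ j ≤ k) ∧ 0 < r ∧ r < Q ^ j ∧ i = m * Q ^ j + r := by
  rw [mem_block]
  constructor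
  · rintro ⟨j, hj, h1, h2⟩
    rw [add_one_mul] at h2
    exact ⟨j, i - m * Q ^ j, hj, by lia, by lia, by lia⟩
  · rintro ⟨j, r, hj, h1, h2, rfl⟩
    exact ⟨j, hj, by lia, by rw [add_one_mul]; lia⟩

lemma VQ_eq {Q : ℕ} (hQ : 2 ≤ Q) (j : ℕ) :
    VQ Q (Q + 1) j = Finset.Ioo (Q ^ (j + 1)) (2 * Q ^ (j + 1)) := by
  induction j with
  | zero =>
    ext i
    simp only [VQ, Finset.mem_Icc, Finset.mem_Ioo, zero_add, pow_one]
    lia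
  | succ j ih =>
    have hq : 2 ≤ Q ^ (j + 1) := hQ.trans (Nat.le_self_pow (by lia) Q)
    rw [VQ, ih, pow_succ Q (j + 1)]
    generalize Q ^ (j + 1) = q at hq ⊢
    ext n
    simp only [Finset.mem_biUnion, Finset.mem_Icc, Finset.mem_Ioo]
    constructor
    · rintro ⟨i, ⟨h1, h2⟩, h3, h4⟩
      have e1 : Q * (q + 1) ≤ Q * i := Nat.mul_le_mul_left _ h1
      have e2 : Q * (i + 1) ≤ Q * (2 * q) := Nat.mul_le_mul_left _ h2
      constructor
      · have : q * Q + Q ≤ Q * i := by linarith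
        lia
      · have : Q * i + Q ≤ 2 * (q * Q) := by linarith
        lia
    · rintro ⟨h1, h2⟩
      have hdm := Nat.div_add_mod n Q
      have hr := Nat.mod_lt n (show 0 < Q by lia)
      have hs1 : q ≤ n / Q := (Nat.le_div_iff_mul_le (by lia)).2 h1.le
      have hs2 : n / Q < 2 * q := (Nat.div_lt_iff_lt_mul (by lia)).2 (by linarith)
      rcases hs1.eq_or_lt with h | h
      · refine ⟨q + 1, ⟨by lia, by lia⟩, ?_, ?_⟩
        · have : Q * (q + 1) = q * Q + Q := by ring
          lia
        · rw [← h] at hdm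
          have : Q * (q + 1) = Q * q + Q := by ring
          lia
      · exact ⟨n / Q, ⟨h, hs2⟩, by lia, by lia⟩

lemma MQ_eq {Q : ℕ} (hQ : 2 ≤ Q) (k : ℕ) : MQ Q (Q + 1) k = block Q 1 k := by
  ext i
  simp only [MQ, Finset.mem_biUnion, Finset.mem_range, VQ_eq hQ, Finset.mem_Ioo, mem_block]
  constructor
  · rintro ⟨j, hj, h⟩
    exact ⟨j + 1, ⟨by lia, by lia⟩, by lia, by lia⟩
  · rintro ⟨j, ⟨h1, h2⟩, h⟩
    obtain ⟨j, rfl⟩ : ∃ j', j = j' + 1 := ⟨j - 1, by lia⟩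
    exact ⟨j, by lia, by lia, by lia⟩

/-- No multiple of `Q` lies in the lowest interval of a block, so multiples of `Q` in a block come
from the same block. -/
lemma mem_block_of_mul {Q m k i : ℕ} (h : Q * i ∈ block Q m k) :
    i ∈ block Q m k := by
  rw [mem_block] at h ⊢
  obtain ⟨j, ⟨h1, h2⟩, h3, h4⟩ := h
  obtain ⟨j, rfl⟩ : ∃ j', j = j' + 1 := ⟨j - 1, by lia⟩
  have e : ∀ m : ℕ, m * Q ^ (j + 1) = Q * (m * Q ^ j) := fun m => by ring
  rw [e] at h3 h4
  have h3' := Nat.lt_of_mul_lt_mul_left h3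
  have h4' := Nat.lt_of_mul_lt_mul_left h4
  refine ⟨j, ⟨?_, by lia⟩, h3', h4'⟩
  by_contra hj
  have : j = 0 := by lia
  subst this
  lia

/-- Distinct intervals of blocks with indices in `[a, aQ)` contain no equal or consecutive integers. -/
lemma interval_sep {Q a m m' j j' i i' : ℕ} (hQ : 2 ≤ Q) (hm : a ≤ m ∧ m < a * Q)
    (hm' : a ≤ m' ∧ m' < a * Q) (hi : m * Q ^ j < i ∧ i < (m + 1) * Q ^ j)
    (hi' : m' * Q ^ j' < i' ∧ i' < (m' + 1) * Q ^ j') (h1 : i ≤ i') (h2 : i' ≤ i + 1) :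
    m = m' ∧ j = j' := by
  have key : ∀ {m m' j j' : ℕ}, m < a * Q → a ≤ m' → j < j' →
      (m + 1) * Q ^ j ≤ m' * Q ^ j' := by
    intro m m' j j' h h' hj
    calc (m + 1) * Q ^ j ≤ (a * Q) * Q ^ j := Nat.mul_le_mul_right _ h
      _ = a * Q ^ (j + 1) := by ring
      _ ≤ m' * Q ^ j' := Nat.mul_le_mul h' (Nat.pow_le_pow_right (by lia) hj)
  rcases lt_trichotomy j j' with h | h | h
  · have := key hm.2 hm'.1 h
    lia
  · subst h
    refine ⟨?_, rfl⟩
    rcases lt_trichotomy m m' with h | h | h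
    · have : (m + 1) * Q ^ j ≤ m' * Q ^ j := Nat.mul_le_mul_right _ h
      lia
    · exact h
    · have : (m' + 1) * Q ^ j ≤ m * Q ^ j := Nat.mul_le_mul_right _ h
      lia
  · have := key hm'.2 hm.1 h
    lia

lemma block_sep {Q a m m' k i i' : ℕ} (hQ : 2 ≤ Q) (hm : a ≤ m ∧ m < a * Q)
    (hm' : a ≤ m' ∧ m' < a * Q) (hi : i ∈ block Q m k) (hi' : i' ∈ block Q m' k)
    (h1 : i ≤ i') (h2 : i' ≤ i + 1) : m = m' := by
  rw [mem_block] at hi hi'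
  obtain ⟨j, -, hi⟩ := hi
  obtain ⟨j', -, hi'⟩ := hi'
  exact (interval_sep hQ hm hm' hi hi' h1 h2).1

lemma separated_block {Q a m m' k : ℕ} (hQ : 2 ≤ Q) (hm : a ≤ m ∧ m < a * Q)
    (hm' : a ≤ m' ∧ m' < a * Q) (h : m ≠ m') :
    Separated Q (block Q m k) (block Q m' k) where
  disj i hi hi' := h (block_sep hQ hm hm' hi hi' le_rfl (by lia))
  mul_left i hi hi' := h (block_sep hQ hm hm' hi (mem_block_of_mul hi') le_rfl (by lia))
  mul_right i hi hi' := h (block_sep hQ hm hm' (mem_block_of_mul hi') hi le_rfl (by lia))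
  succ_left i hi hi' := h (block_sep hQ hm hm' hi hi' (by lia) le_rfl)
  succ_right i hi hi' := h (block_sep hQ hm' hm hi hi' (by lia) le_rfl).symm

lemma lt_of_mem_block {Q a m k i : ℕ} (hQ : 2 ≤ Q) (hm : a ≤ m) (hi : i ∈ block Q m k) :
    a * Q < i := by
  obtain ⟨j, ⟨hj, -⟩, h, -⟩ := mem_block.1 hi
  exact (Nat.mul_le_mul hm (Nat.le_self_pow (by lia) Q)).trans_lt h

lemma separated_initial {Q a m k : ℕ} (hQ : 2 ≤ Q) (hm : a ≤ m) :
    Separated Q (block Q m k) (Finset.Ico 1 (a * Q)) where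
  disj i hi hi' := by
    have := lt_of_mem_block hQ hm hi
    have := Finset.mem_Ico.1 hi'
    lia
  mul_left i hi hi' := by
    have := lt_of_mem_block hQ hm hi
    have := Finset.mem_Ico.1 hi'
    have : 1 * i ≤ Q * i := Nat.mul_le_mul_right _ (by lia)
    lia
  mul_right i hi hi' := by
    have := lt_of_mem_block hQ hm (mem_block_of_mul hi')
    have := Finset.mem_Ico.1 hi
    lia
  succ_left i hi hi' := by
    have := lt_of_mem_block hQ hm hi
    have := Finset.mem_Ico.1 hi'
    lia
  succ_right i hi hi' := by
    have := lt_of_mem_block hQ hm hi'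
    have := Finset.mem_Ico.1 hi
    lia

lemma block_subset {Q a m k i : ℕ} (hQ : 2 ≤ Q) (hm : m < a * Q) (hi : i ∈ block Q m k) :
    i < a * Q ^ (k + 1) := by
  obtain ⟨j, ⟨-, hj⟩, -, h⟩ := mem_block.1 hi
  calc i < (m + 1) * Q ^ j := h
    _ ≤ (a * Q) * Q ^ k := Nat.mul_le_mul hm (Nat.pow_le_pow_right (by lia) hj)
    _ = a * Q ^ (k + 1) := by ring

/-- The blocks with indices in `[a, aQ)` and their left endpoints cover `[aQ, a Q^(k+1))`. -/
lemma exists_block {Q a k i : ℕ} (hQ : 2 ≤ Q) (h1 : a * Q ≤ i) (h2 : i < a * Q ^ (k + 1)) :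
    ∃ m, (a ≤ m ∧ m < a * Q) ∧
      (i ∈ block Q m k ∨ ∃ j, (1 ≤ j ∧ j ≤ k) ∧ m * Q ^ j = i) := by
  have ha : 0 < a := by
    rcases Nat.eq_zero_or_pos a with rfl | h
    · simp at h2
    · exact h
  have hQi : Q ≤ i / a := (Nat.le_div_iff_mul_le ha).2 (by linarith)
  have hne : i / a ≠ 0 := by lia
  set j := Nat.log Q (i / a) with hj
  have l1 : Q ^ j ≤ i / a := Nat.pow_log_le_self Q hne
  have l2 : i / a < Q ^ (j + 1) := Nat.lt_pow_succ_log_self (by lia) _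
  have hj1 : 1 ≤ j := by
    by_contra h
    have : j = 0 := by lia
    simp [this] at l2
    lia
  have hjk : j ≤ k := by
    have : i / a < Q ^ (k + 1) := (Nat.div_lt_iff_lt_mul ha).2 (by linarith)
    have := (Nat.pow_lt_pow_iff_right (by lia : 1 < Q)).1 (l1.trans_lt this)
    lia
  have hqp : 0 < Q ^ j := by positivity
  have e1 : Q ^ j * a ≤ i := (Nat.le_div_iff_mul_le ha).1 l1
  have e2 : i < Q ^ (j + 1) * a := (Nat.div_lt_iff_lt_mul ha).1 l2
  refine ⟨i / Q ^ j, ⟨(Nat.le_div_iff_mul_le hqp).2 (by linarith),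
    (Nat.div_lt_iff_lt_mul hqp).2 (by rw [pow_succ] at e2; linarith)⟩, ?_⟩
  have hdm := Nat.div_add_mod i (Q ^ j)
  have hr := Nat.mod_lt i hqp
  rw [mul_comm] at hdm
  rcases Nat.eq_zero_or_pos (i % Q ^ j) with h | h
  · exact Or.inr ⟨j, ⟨hj1, hjk⟩, by lia⟩
  · exact Or.inl (mem_block'.2 ⟨j, _, ⟨hj1, hjk⟩, h, hr, hdm.symm⟩)

/-- The map from block `m` to block `m'` sending `m Q^j + r` to `m' Q^j + r`. The level `j` of `i`
is recovered as `⌊log_Q (i / m)⌋`. -/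
def shift (Q m m' i : ℕ) : ℕ :=
  m' * Q ^ Nat.log Q (i / m) + (i - m * Q ^ Nat.log Q (i / m))

lemma shift_eq {Q m j r : ℕ} (m' : ℕ) (hQ : 2 ≤ Q) (hm : 1 ≤ m) (hr : r < Q ^ j) :
    shift Q m m' (m * Q ^ j + r) = m' * Q ^ j + r := by
  have : Nat.log Q ((m * Q ^ j + r) / m) = j := by
    apply Nat.log_eq_of_pow_le_of_lt_pow
    · exact (Nat.le_div_iff_mul_le hm).2 (by linarith)
    · apply (Nat.div_lt_iff_lt_mul hm).2
      have : 2 * (Q ^ j * m) ≤ Q * (Q ^ j * m) := Nat.mul_le_mul_right _ hQ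
      have : Q ^ j * 1 ≤ Q ^ j * m := Nat.mul_le_mul_left _ hm
      calc m * Q ^ j + r < Q * (Q ^ j * m) := by linarith
        _ = Q ^ (j + 1) * m := by ring
  simp [shift, this]

lemma logCount_block_le {Q N : ℕ} {C : Set ℕ} {A : ℕ → ℕ → ℕ} (hQ : 2 ≤ Q) (hN : 2 ≤ N)
    (hC : 0 ∈ C) (hA : ∀ a : ℕ, a < N → A 0 a = 1 ∧ A a 0 = 1) {m m' : ℕ} (hm : 1 ≤ m)
    (k : ℕ) :
    logCount Q A N C (block Q m' k) ≤ logCount Q A N C (block Q m k) := by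
  apply logCount_le_of_pullback hN hC hA (shift Q m m')
  · intro i hi
    obtain ⟨j, r, hj, h1, h2, rfl⟩ := mem_block'.1 hi
    rw [shift_eq m' hQ hm h2]
    exact mem_block'.2 ⟨j, r, hj, h1, h2, rfl⟩
  · intro i hi
    obtain ⟨j, r, hj, h1, h2, rfl⟩ := mem_block'.1 hi
    exact ⟨m * Q ^ j + r, mem_block'.2 ⟨j, r, hj, h1, h2, rfl⟩, shift_eq m' hQ hm h2⟩
  · intro i hi _
    obtain ⟨j, r, hj, h1, h2, rfl⟩ := mem_block'.1 hi
    have e : Q * (m * Q ^ j + r) = m * Q ^ (j + 1) + Q * r := by ring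
    rw [e, shift_eq m' hQ hm h2, shift_eq m' hQ hm]
    · ring
    · rw [pow_succ, mul_comm]
      exact Nat.mul_lt_mul_of_pos_right h2 (by lia)
  · intro i hi hi'
    obtain ⟨j, r, hj, h1, h2, rfl⟩ := mem_block'.1 hi
    obtain ⟨j', -, hi'⟩ := mem_block.1 hi'
    have hmQ : m < m * Q := by
      have : m * 2 ≤ m * Q := Nat.mul_le_mul_left _ hQ
      lia
    have := (interval_sep (i := m * Q ^ j + r) (j := j) hQ ⟨le_rfl, hmQ⟩ ⟨le_rfl, hmQ⟩
      ⟨by lia, by rw [add_one_mul]; lia⟩ hi' (by lia) le_rfl).2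
    subst this
    rw [shift_eq m' hQ hm h2, add_assoc, shift_eq m' hQ hm, add_assoc]
    rw [add_one_mul] at hi'
    lia

lemma logCount_block {Q N : ℕ} {C : Set ℕ} {A : ℕ → ℕ → ℕ} (hQ : 2 ≤ Q) (hN : 2 ≤ N)
    (hC : 0 ∈ C) (hA : ∀ a : ℕ, a < N → A 0 a = 1 ∧ A a 0 = 1) {m : ℕ} (hm : 1 ≤ m) (k : ℕ) :
    logCount Q A N C (block Q m k) = logCount Q A N C (block Q 1 k) :=
  le_antisymm (logCount_block_le hQ hN hC hA le_rfl k)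
    (logCount_block_le hQ hN hC hA hm k)

/-! ### The recursive estimates -/

section Recursion

variable {Q N : ℕ} {C : Set ℕ} {A : ℕ → ℕ → ℕ}

lemma lower_rec (hQ : 2 ≤ Q) (hN : 2 ≤ N) (hC : 0 ∈ C)
    (hA : ∀ a : ℕ, a < N → A 0 a = 1 ∧ A a 0 = 1) (k n : ℕ) :
    logCount Q A N C (Finset.Icc 1 (n / Q ^ k))
        + ((n / Q ^ (k + 1) : ℕ) : ℝ) * ((Q : ℝ) - 1) * logCount Q A N C (block Q 1 k)
      ≤ logCount Q A N C (Finset.Icc 1 n) + Q * Real.log N := by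
  set a := n / Q ^ (k + 1) with ha
  have hlog : 0 ≤ Real.log N := Real.log_natCast_nonneg _
  have haq : a = n / Q ^ k / Q := by rw [ha, pow_succ, Nat.div_div_eq_div_mul]
  have hdm := Nat.div_add_mod (n / Q ^ k) Q
  have hr := Nat.mod_lt (n / Q ^ k) (show 0 < Q by lia)
  rw [← haq, mul_comm] at hdm
  have han : a * Q ^ (k + 1) ≤ n := Nat.div_mul_le_self _ _
  have hsum : ∑ m ∈ Finset.Ico a (a * Q), logCount Q A N C (block Q m k)
      = (a : ℝ) * ((Q : ℝ) - 1) * logCount Q A N C (block Q 1 k) := by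
    rw [Finset.sum_congr rfl (g := fun _ => logCount Q A N C (block Q 1 k))]
    · rw [Finset.sum_const, Nat.card_Ico, nsmul_eq_mul,
        Nat.cast_sub (Nat.le_mul_of_pos_right _ (by lia))]
      push_cast
      ring
    · intro m hm
      rw [Finset.mem_Ico] at hm
      refine logCount_block hQ hN hC hA ?_ k
      rcases Nat.eq_zero_or_pos a with h | h
      · simp [h] at hm
      · lia
  have h1 := le_logCount_union_biUnion (Q := Q) hN hC hA (Finset.Ico 1 (a * Q))
    (Finset.Ico a (a * Q)) (fun m => block Q m k)
    (fun m hm => separated_initial hQ (Finset.mem_Ico.1 hm).1)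
    (fun m hm m' hm' h => separated_block hQ (Finset.mem_Ico.1 hm) (Finset.mem_Ico.1 hm') h)
  have h2 : logCount Q A N C
      (Finset.Ico 1 (a * Q) ∪ (Finset.Ico a (a * Q)).biUnion (fun m => block Q m k)) ≤
      logCount Q A N C (Finset.Icc 1 n) := by
    apply logCount_mono hN hC hA
    intro i hi
    simp only [Finset.mem_union, Finset.mem_biUnion, Finset.mem_Ico, Finset.mem_Icc] at hi ⊢
    rcases hi with hi | ⟨m, hm, hi⟩
    · have : a * Q ≤ a * Q ^ (k + 1) := Nat.mul_le_mul_left _ (Nat.le_self_pow (by lia) Q)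
      lia
    · have := lt_of_mem_block hQ hm.1 hi
      have := block_subset hQ hm.2 hi
      lia
  have h3 : logCount Q A N C (Finset.Icc 1 (n / Q ^ k)) ≤
      logCount Q A N C (Finset.Ico 1 (a * Q)) + Q * Real.log N := by
    calc logCount Q A N C (Finset.Icc 1 (n / Q ^ k))
        ≤ logCount Q A N C (Finset.Ico 1 (a * Q) ∪ Finset.Ico (a * Q) (a * Q + Q)) := by
          apply logCount_mono hN hC hA
          intro i hi
          simp only [Finset.mem_union, Finset.mem_Ico, Finset.mem_Icc] at hi ⊢
          lia
      _ ≤ _ := logCount_union_le hN hC hA _ _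
      _ ≤ _ := by
          gcongr
          simpa using logCount_le_card (Q := Q) hN hC hA (Finset.Ico (a * Q) (a * Q + Q))
  linarith

lemma upper_rec (hQ : 2 ≤ Q) (hN : 2 ≤ N) (hC : 0 ∈ C)
    (hA : ∀ a : ℕ, a < N → A 0 a = 1 ∧ A a 0 = 1) (k n : ℕ) :
    logCount Q A N C (Finset.Icc 1 n) ≤
      logCount Q A N C (Finset.Icc 1 (n / Q ^ k))
        + ((n / Q ^ (k + 1) : ℕ) : ℝ) * ((Q : ℝ) - 1) *
          (logCount Q A N C (block Q 1 k) + k * Real.log N) + (Q : ℝ) ^ (k + 1) * Real.log N := by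
  set a := n / Q ^ (k + 1) with ha
  have hlog : 0 ≤ Real.log N := Real.log_natCast_nonneg _
  have haq : a = n / Q ^ k / Q := by rw [ha, pow_succ, Nat.div_div_eq_div_mul]
  have haQ : a * Q ≤ n / Q ^ k := haq ▸ Nat.div_mul_le_self _ _
  have han : n < a * Q ^ (k + 1) + Q ^ (k + 1) := Nat.lt_div_mul_add (by positivity)
  -- the block `m` together with its left endpoints
  let G : ℕ → Finset ℕ := fun m => block Q m k ∪ (Finset.Icc 1 k).image fun j => m * Q ^ j
  have hG : ∀ m ∈ Finset.Ico a (a * Q),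
      logCount Q A N C (G m) ≤ logCount Q A N C (block Q 1 k) + k * Real.log N := by
    intro m hm
    rw [Finset.mem_Ico] at hm
    have hm1 : 1 ≤ m := by
      rcases Nat.eq_zero_or_pos a with h | h
      · simp [h] at hm
      · lia
    rw [← logCount_block (m := m) hQ hN hC hA hm1 k]
    refine (logCount_union_le hN hC hA _ _).trans ?_
    gcongr
    refine (logCount_le_card hN hC hA _).trans ?_
    gcongr
    simpa using Finset.card_image_le (s := Finset.Icc 1 k) (f := fun j => m * Q ^ j)
  have hsum : ∑ m ∈ Finset.Ico a (a * Q), logCount Q A N C (G m)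
      ≤ (a : ℝ) * ((Q : ℝ) - 1) * (logCount Q A N C (block Q 1 k) + k * Real.log N) := by
    refine (Finset.sum_le_sum hG).trans (le_of_eq ?_)
    rw [Finset.sum_const, Nat.card_Ico, nsmul_eq_mul,
        Nat.cast_sub (Nat.le_mul_of_pos_right _ (by lia))]
    push_cast
    ring
  have hE := logCount_le_card (Q := Q) hN hC hA
    (Finset.Ico (a * Q ^ (k + 1)) (a * Q ^ (k + 1) + Q ^ (k + 1)))
  simp only [Nat.card_Ico, Nat.add_sub_cancel_left, Nat.cast_pow] at hE
  have h0 : logCount Q A N C (Finset.Ico 1 (a * Q)) ≤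
      logCount Q A N C (Finset.Icc 1 (n / Q ^ k)) := by
    apply logCount_mono hN hC hA
    intro i hi
    simp only [Finset.mem_Ico, Finset.mem_Icc] at hi ⊢
    lia
  have h1 : logCount Q A N C (Finset.Icc 1 n) ≤ logCount Q A N C
      ((Finset.Ico 1 (a * Q) ∪ (Finset.Ico a (a * Q)).biUnion G) ∪
        Finset.Ico (a * Q ^ (k + 1)) (a * Q ^ (k + 1) + Q ^ (k + 1))) := by
    apply logCount_mono hN hC hA
    intro i hi
    simp only [G, Finset.mem_union, Finset.mem_biUnion, Finset.mem_Ico, Finset.mem_Icc,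
      Finset.mem_image] at hi ⊢
    by_cases c1 : i < a * Q
    · exact Or.inl (Or.inl ⟨hi.1, c1⟩)
    by_cases c2 : i < a * Q ^ (k + 1)
    · exact Or.inl (Or.inr (exists_block hQ (not_lt.1 c1) c2))
    · exact Or.inr ⟨not_lt.1 c2, by lia⟩
  have h2 := logCount_union_le (Q := Q) hN hC hA
    (Finset.Ico 1 (a * Q) ∪ (Finset.Ico a (a * Q)).biUnion G)
    (Finset.Ico (a * Q ^ (k + 1)) (a * Q ^ (k + 1) + Q ^ (k + 1)))
  have h3 := logCount_union_biUnion_le (Q := Q) hN hC hA (Finset.Ico 1 (a * Q))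
    (Finset.Ico a (a * Q)) G
  linarith

end Recursion

/-! ### Passing to the limit -/

/-- A sequence growing by at most `D` from `⌊n / B⌋` to `n` is `O(log n)` from above. -/
lemma eventually_le_of_div_rec {B : ℕ} (hB : 2 ≤ B) {u : ℕ → ℝ} {D : ℝ} (hD : 0 ≤ D)
    (h : ∀ n, u n ≤ u (n / B) + D) {ε : ℝ} (hε : 0 < ε) :
    ∀ᶠ n : ℕ in atTop, u n ≤ ε * n := by
  have key : ∀ n, u n ≤ u 0 + D * (Nat.log B n + 1) := by
    intro n
    induction n using Nat.strong_induction_on with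
    | _ n ih =>
      by_cases hn : n < B
      · have := h n
        rw [Nat.div_eq_of_lt hn] at this
        simpa [Nat.log_of_lt hn] using this
      · have h1 := ih (n / B) (Nat.div_lt_self (by lia) (by lia))
        have h2 : Nat.log B n = Nat.log B (n / B) + 1 :=
          Nat.log_of_one_lt_of_le (by lia) (by lia)
        rw [h2]
        push_cast
        linarith [h n]
  have hlog : Tendsto (fun n : ℕ => u 0 / n + D * (Real.log n / n / Real.log B + 1 / n))
      atTop (𝓝 (0 + D * (0 / Real.log B + 0))) := by
    have t1 : Tendsto (fun n : ℕ => Real.log (n : ℝ) / n) atTop (𝓝 0) :=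
      Real.isLittleO_log_id_atTop.tendsto_div_nhds_zero.comp tendsto_natCast_atTop_atTop
    exact (tendsto_const_div_atTop_nhds_zero_nat _).add
      (((t1.div_const _).add (tendsto_const_div_atTop_nhds_zero_nat _)).const_mul _)
  simp only [zero_div, add_zero, mul_zero] at hlog
  filter_upwards [hlog.eventually_lt_const hε, eventually_ge_atTop 1] with n hn hn1
  have hn0 : (0 : ℝ) < n := by exact_mod_cast hn1
  have hBl : 0 < Real.log B := Real.log_pos (by exact_mod_cast hB)
  have hl : (Nat.log B n : ℝ) ≤ Real.log n / Real.log B := by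
    rw [le_div_iff₀ hBl, ← Real.log_pow]
    apply Real.log_le_log (by positivity)
    exact_mod_cast Nat.pow_log_le_self B (by lia)
  calc u n ≤ u 0 + D * (Nat.log B n + 1) := key n
    _ ≤ u 0 + D * (Real.log n / Real.log B + 1) := by gcongr
    _ = (u 0 / n + D * (Real.log n / n / Real.log B + 1 / n)) * n := by field_simp
    _ ≤ ε * n := by gcongr

/-- If `p n` is eventually within any `ε` of each interval `[lo k, hi k]`, and the lengths of these
intervals tend to `0`, then `p` converges to their common point. -/
lemma exists_limit {p lo hi : ℕ → ℝ}
    (hlo : ∀ k, 1 ≤ k → ∀ ε > 0, ∀ᶠ n in atTop, lo k - ε ≤ p n)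
    (hhi : ∀ k, 1 ≤ k → ∀ ε > 0, ∀ᶠ n in atTop, p n ≤ hi k + ε)
    (hgap : Tendsto (fun k => hi k - lo k) atTop (𝓝 0)) :
    ∃ h, Tendsto p atTop (𝓝 h) ∧ (∀ k, 1 ≤ k → lo k ≤ h ∧ h ≤ hi k) ∧
      Tendsto lo atTop (𝓝 h) := by
  have hle : ∀ k k', 1 ≤ k → 1 ≤ k' → lo k ≤ hi k' := by
    intro k k' hk hk'
    apply le_of_forall_pos_le_add
    intro ε hε
    obtain ⟨n, h1, h2⟩ := ((hlo k hk (ε / 2) (by positivity)).and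
      (hhi k' hk' (ε / 2) (by positivity))).exists
    linarith
  have hbdd : BddAbove (Set.range fun k => lo (k + 1)) := by
    refine ⟨hi 1, ?_⟩
    rintro _ ⟨k, rfl⟩
    exact hle _ _ (by lia) le_rfl
  set h := ⨆ k, lo (k + 1) with hh
  have hmem : ∀ k, 1 ≤ k → lo k ≤ h ∧ h ≤ hi k := by
    intro k hk
    constructor
    · have := le_ciSup hbdd (k - 1)
      simpa [Nat.sub_add_cancel hk] using this
    · exact ciSup_le fun j => hle _ _ (by lia) hk
  refine ⟨h, ?_, hmem, ?_⟩
  · rw [Metric.tendsto_nhds]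
    intro ε hε
    obtain ⟨k, hk1, hk⟩ := ((eventually_ge_atTop 1).and
      (hgap.eventually_lt_const (show (0 : ℝ) < ε / 3 by positivity))).exists
    filter_upwards [hlo k hk1 (ε / 3) (by positivity), hhi k hk1 (ε / 3) (by positivity)]
      with n h1 h2
    obtain ⟨h3, h4⟩ := hmem k hk1
    rw [Real.dist_eq, abs_lt]
    constructor <;> linarith
  · have hlow : Tendsto (fun k => h - (hi k - lo k)) atTop (𝓝 h) := by
      simpa using hgap.const_sub h
    refine tendsto_of_tendsto_of_tendsto_of_le_of_le' hlow tendsto_const_nhds ?_ ?_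
    · filter_upwards [eventually_ge_atTop 1] with k hk
      linarith [(hmem k hk).2]
    · filter_upwards [eventually_ge_atTop 1] with k hk
      exact (hmem k hk).1

/-- The reciprocal of `∑_{1 ≤ j ≤ k} Q^j`, the number of integers taken up by a block together with
its left endpoints. -/
noncomputable def coef (Q k : ℕ) : ℝ := ((Q : ℝ) - 1) / ((Q : ℝ) * ((Q : ℝ) ^ k - 1))

lemma coef_facts {Q k : ℕ} (hQ : 2 ≤ Q) (hk : 1 ≤ k) :
    0 ≤ coef Q k ∧ coef Q k * (Q * ((Q : ℝ) ^ k - 1)) = Q - 1 ∧ coef Q k ≤ 2 / (Q : ℝ) ^ k := by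
  have hq : (2 : ℝ) ≤ Q := by exact_mod_cast hQ
  have hqk : (2 : ℝ) ≤ (Q : ℝ) ^ k := hq.trans (le_self_pow₀ (by linarith) (by lia))
  have hpos : 0 < (Q : ℝ) * ((Q : ℝ) ^ k - 1) := mul_pos (by linarith) (by linarith)
  refine ⟨div_nonneg (by linarith) hpos.le, div_mul_cancel₀ _ hpos.ne', ?_⟩
  rw [coef, div_le_div_iff₀ hpos (by linarith)]
  nlinarith

lemma tendsto_coef_mul {Q : ℕ} (hQ : 2 ≤ Q) :
    Tendsto (fun k : ℕ => coef Q k * k) atTop (𝓝 0) := by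
  have hq : (1 : ℝ) < Q := by exact_mod_cast hQ
  have h := (tendsto_pow_const_div_const_pow_of_one_lt 1 hq).const_mul 2
  rw [mul_zero] at h
  refine squeeze_zero' ?_ ?_ h
  · filter_upwards [eventually_ge_atTop 1] with k hk
    exact mul_nonneg (coef_facts hQ hk).1 (by positivity)
  · filter_upwards [eventually_ge_atTop 1] with k hk
    calc coef Q k * k ≤ 2 / (Q : ℝ) ^ k * k := by
          gcongr
          exact (coef_facts hQ hk).2.2
      _ = 2 * ((k : ℝ) ^ 1 / (Q : ℝ) ^ k) := by ring

/-- The decrement `n - ⌊n / Q^k⌋` is, up to a bounded error, the size of the part of `[1, n]` that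
is filled by `⌊n / Q^(k+1)⌋ (Q-1)` blocks. -/
lemma decrement_bounds {Q : ℕ} (hQ : 2 ≤ Q) (k n : ℕ) :
    ((n / Q ^ (k + 1) : ℕ) : ℝ) * (Q * ((Q : ℝ) ^ k - 1)) - Q ≤ (n : ℝ) - (n / Q ^ k : ℕ) ∧
    (n : ℝ) - (n / Q ^ k : ℕ) ≤
      ((n / Q ^ (k + 1) : ℕ) : ℝ) * (Q * ((Q : ℝ) ^ k - 1)) + (Q : ℝ) ^ (k + 1) := by
  set a := n / Q ^ (k + 1) with ha
  have haq : a = n / Q ^ k / Q := by rw [ha, pow_succ, Nat.div_div_eq_div_mul]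
  have h1 : a * Q ≤ n / Q ^ k := haq ▸ Nat.div_mul_le_self _ _
  have h2 : n / Q ^ k < a * Q + Q := haq ▸ Nat.lt_div_mul_add (by lia)
  have h3 : a * Q ^ (k + 1) ≤ n := Nat.div_mul_le_self _ _
  have h4 : n < a * Q ^ (k + 1) + Q ^ (k + 1) := Nat.lt_div_mul_add (by positivity)
  generalize n / Q ^ k = b at *
  have h1' : (a : ℝ) * Q ≤ b := by exact_mod_cast h1
  have h2' : (b : ℝ) < a * Q + Q := by exact_mod_cast h2
  have h3' : (a : ℝ) * (Q : ℝ) ^ (k + 1) ≤ n := by exact_mod_cast h3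
  have h4' : (n : ℝ) < a * (Q : ℝ) ^ (k + 1) + (Q : ℝ) ^ (k + 1) := by exact_mod_cast h4
  have e : (a : ℝ) * (Q * ((Q : ℝ) ^ k - 1)) = a * (Q : ℝ) ^ (k + 1) - a * Q := by ring
  rw [e]
  constructor <;> linarith

section Bounds

variable {Q N : ℕ} {C : Set ℕ} {A : ℕ → ℕ → ℕ}

lemma eventually_lower (hQ : 2 ≤ Q) (hN : 2 ≤ N) (hC : 0 ∈ C)
    (hA : ∀ a : ℕ, a < N → A 0 a = 1 ∧ A a 0 = 1) {k : ℕ} (hk : 1 ≤ k) {ε : ℝ} (hε : 0 < ε) :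
    ∀ᶠ n : ℕ in atTop, coef Q k * logCount Q A N C (block Q 1 k) - ε ≤
      logCount Q A N C (Finset.Icc 1 n) / n := by
  obtain ⟨c0, c1, -⟩ := coef_facts hQ hk
  have hS := logCount_nonneg (Q := Q) (A := A) (N := N) (C := C) (block Q 1 k)
  set S := logCount Q A N C (block Q 1 k) with hSdef
  have hcS : 0 ≤ coef Q k * S := mul_nonneg c0 hS
  have hlog : 0 ≤ Real.log N := Real.log_natCast_nonneg _
  have hB : 2 ≤ Q ^ k := hQ.trans (Nat.le_self_pow (by lia) Q)
  have := eventually_le_of_div_rec hB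
    (u := fun n => coef Q k * S * n - logCount Q A N C (Finset.Icc 1 n))
    (D := coef Q k * S * (Q : ℝ) ^ (k + 1) + Q * Real.log N) (by positivity) (fun n => by
      have h1 := lower_rec hQ hN hC hA k n
      have h2 := mul_le_mul_of_nonneg_left (decrement_bounds hQ k n).2 hcS
      have e : coef Q k * S * (((n / Q ^ (k + 1) : ℕ) : ℝ) * (Q * ((Q : ℝ) ^ k - 1))) =
          ((n / Q ^ (k + 1) : ℕ) : ℝ) * ((Q : ℝ) - 1) * S := by
        rw [← c1]; ring
      rw [mul_add, e] at h2
      linarith) hε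
  filter_upwards [this, eventually_ge_atTop 1] with n hn hn1
  have hn0 : (0 : ℝ) < n := by exact_mod_cast hn1
  rw [le_div_iff₀ hn0]
  linarith

lemma eventually_upper (hQ : 2 ≤ Q) (hN : 2 ≤ N) (hC : 0 ∈ C)
    (hA : ∀ a : ℕ, a < N → A 0 a = 1 ∧ A a 0 = 1) {k : ℕ} (hk : 1 ≤ k) {ε : ℝ} (hε : 0 < ε) :
    ∀ᶠ n : ℕ in atTop, logCount Q A N C (Finset.Icc 1 n) / n ≤
      coef Q k * (logCount Q A N C (block Q 1 k) + k * Real.log N) + ε := by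
  obtain ⟨c0, c1, -⟩ := coef_facts hQ hk
  have hlog : 0 ≤ Real.log N := Real.log_natCast_nonneg _
  have hS : 0 ≤ logCount Q A N C (block Q 1 k) + k * Real.log N :=
    add_nonneg (logCount_nonneg _) (by positivity)
  have hrec := upper_rec hQ hN hC hA k
  set S := logCount Q A N C (block Q 1 k) + k * Real.log N with hSdef
  have hcS : 0 ≤ coef Q k * S := mul_nonneg c0 hS
  have hB : 2 ≤ Q ^ k := hQ.trans (Nat.le_self_pow (by lia) Q)
  have := eventually_le_of_div_rec hB
    (u := fun n => logCount Q A N C (Finset.Icc 1 n) - coef Q k * S * n)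
    (D := coef Q k * S * Q + (Q : ℝ) ^ (k + 1) * Real.log N) (by positivity) (fun n => by
      have h1 := hrec n
      have h2 := mul_le_mul_of_nonneg_left (decrement_bounds hQ k n).1 hcS
      have e : coef Q k * S * (((n / Q ^ (k + 1) : ℕ) : ℝ) * (Q * ((Q : ℝ) ^ k - 1))) =
          ((n / Q ^ (k + 1) : ℕ) : ℝ) * ((Q : ℝ) - 1) * S := by
        rw [← c1]; ring
      rw [mul_sub, e] at h2
      linarith) hε
  filter_upwards [this, eventually_ge_atTop 1] with n hn hn1
  have hn0 : (0 : ℝ) < n := by exact_mod_cast hn1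
  rw [div_le_iff₀ hn0]
  linarith

lemma XQANC_eq (hQ : 2 ≤ Q) (n : ℕ) : XQANC Q A N C n = config Q A N C (Finset.Icc 1 n) := by
  ext x
  simp only [XQANC, config, Set.mem_ofPred_eq, Finset.mem_Icc]
  have hle : ∀ i, i ≤ Q * i := fun i => Nat.le_mul_of_pos_left i (by lia)
  refine and_congr_right fun _ => and_congr ?_ (and_congr ?_ ?_)
  · exact ⟨fun h i hi hi' => h i hi.1 hi'.2,
      fun h i hi hi' => h i ⟨hi, (hle i).trans hi'⟩ ⟨hi.trans (hle i), hi'⟩⟩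
  · exact ⟨fun h i hi hi' => h i hi.1 hi'.2,
      fun h i hi hi' => h i ⟨hi, by lia⟩ ⟨by lia, hi'⟩⟩
  · exact ⟨fun h i hi => h i (by lia), fun h i hi => h i (by lia)⟩

lemma SigQANC_eq (hQ : 2 ≤ Q) (k : ℕ) : SigQANC Q A N C k = config Q A N C (block Q 1 k) := by
  simp only [SigQANC, config, MQ_eq hQ]

end Bounds

end QEntropy

/-- For `Q ≥ 2`, `N ≥ 2` symbols, a constraint set `C ∋ 0` and a
transition matrix `A` with `A(0,a) = A(a,0) = 1`, the limit
`h = lim_{n→∞} (1/n)·log|X_n(N,C)|` exists; for every `k ≥ 2` it satisfies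
`((Q−1)/(Q(Q^k−1)))·log|Σ_k(Q;A;N,C)| ≤ h ≤
 ((Q−1)/(Q(Q^k−1)))·(log|Σ_k(Q;A;N,C)| + k·log N)`;
and `h = lim_{k→∞} ((Q−1)/(Q(Q^k−1)))·log|Σ_k(Q;A;N,C)|`. -/
theorem entropy_XQANC (Q : ℕ) (hQ : 2 ≤ Q) (N : ℕ) (hN : 2 ≤ N)
    (C : Set ℕ) (hC : 0 ∈ C) (A : ℕ → ℕ → ℕ)
    (hA : ∀ a : ℕ, a < N → A 0 a = 1 ∧ A a 0 = 1) :
    ∃ h : ℝ,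
      Tendsto (fun n : ℕ => Real.log (Nat.card (XQANC Q A N C n)) / (n : ℝ))
        atTop (nhds h) ∧
      (∀ k : ℕ, 2 ≤ k →
        ((Q : ℝ) - 1) / ((Q : ℝ) * ((Q : ℝ) ^ k - 1)) *
            Real.log (Nat.card (SigQANC Q A N C k)) ≤ h ∧
        h ≤ ((Q : ℝ) - 1) / ((Q : ℝ) * ((Q : ℝ) ^ k - 1)) *
            (Real.log (Nat.card (SigQANC Q A N C k)) + (k : ℝ) * Real.log N)) ∧
      Tendsto (fun k : ℕ => ((Q : ℝ) - 1) / ((Q : ℝ) * ((Q : ℝ) ^ k - 1)) *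
          Real.log (Nat.card (SigQANC Q A N C k))) atTop (nhds h) := by
  have hgap : Tendsto (fun k : ℕ =>
      QEntropy.coef Q k * (QEntropy.logCount Q A N C (QEntropy.block Q 1 k) + k * Real.log N)
        - QEntropy.coef Q k * QEntropy.logCount Q A N C (QEntropy.block Q 1 k))
      atTop (𝓝 0) := by
    have h := (QEntropy.tendsto_coef_mul hQ).mul_const (Real.log N)
    rw [zero_mul] at h
    exact h.congr fun k => by ring
  obtain ⟨h, h1, h2, h3⟩ := QEntropy.exists_limit
    (p := fun n : ℕ => QEntropy.logCount Q A N C (Finset.Icc 1 n) / n)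
    (fun k hk ε hε => QEntropy.eventually_lower hQ hN hC hA hk hε)
    (fun k hk ε hε => QEntropy.eventually_upper hQ hN hC hA hk hε) hgap
  simp only [QEntropy.XQANC_eq hQ, QEntropy.SigQANC_eq hQ]
  exact ⟨h, h1, fun k hk => h2 k (by lia), h3⟩
end

section
/- For every i ∈ I_{2,3} there exist an integer N ≥ 0 and a strictly decreasing finite sequence i_0 > i_1 > ⋯ > i_N of elements of I_{2,3} with i_0 = i and i_N = 1 such that, for each 0 ≤ k < N, the sets i_k·M_4 = {i_k, 2i_k, 3i_k, 4i_k} and i_{k+1}·M_4 = {i_{k+1}, 2i_{k+1}, 3i_{k+1}, 4i_{k+1}} are consecutive. -/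
/-!
Every `i > 1` in `I_{2,3}` has a consecutive `j < i` in `I_{2,3}`, so strong induction gives the
chain. Choose the sign `ε = ±1` with `i ≡ ε (mod 4)`. Then `(i + ε) / 2` is odd, and it works
unless `3 ∣ i + ε`. In that case `3 ∤ i - ε`, so `(i - ε) / 4` works if `i ≢ ε (mod 8)`, while
if `i ≡ ε (mod 8)` then `3 * i + ε ≡ 4 (mod 8)` and `(3 * i + ε) / 4` works.
-/

/-- `I_{2,3}` : positive integers divisible by neither 2 nor 3. -/
def I23 (i : ℕ) : Prop := 0 < i ∧ ¬ 2 ∣ i ∧ ¬ 3 ∣ i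

/-- `iM_4 = {i, 2i, 3i, 4i}`. -/
def iM4 (i : ℕ) : Finset ℕ := {i, 2 * i, 3 * i, 4 * i}

/-- Two finite sets of positive integers are consecutive if some element of one
differs by exactly `1` from some element of the other. -/
def Consecutive (S S' : Finset ℕ) : Prop :=
  ∃ s ∈ S, ∃ s' ∈ S', s' = s + 1 ∨ s = s' + 1

/-- The descent step: a member of `I_{2,3}` other than `1` has a smaller consecutive one. -/
lemma exists_smaller_consecutive (i : ℕ) (hi : I23 i) (h1 : i ≠ 1) :
    ∃ j, j < i ∧ I23 j ∧ Consecutive (iM4 i) (iM4 j) := by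
  obtain ⟨hpos, h2, h3⟩ := hi
  have key : ∃ j, j < i ∧ I23 j ∧
      (2 * j = i + 1 ∨ i = 2 * j + 1 ∨ 4 * j = i + 1 ∨ i = 4 * j + 1 ∨
        4 * j = 3 * i + 1 ∨ 3 * i = 4 * j + 1) := by
    unfold I23
    by_cases h4 : i % 4 = 1
    · by_cases h : i % 3 = 1
      · exact ⟨(i + 1) / 2, by omega⟩
      · by_cases h8 : i % 8 = 5
        · exact ⟨(i - 1) / 4, by omega⟩
        · exact ⟨(3 * i + 1) / 4, by omega⟩
    · by_cases h : i % 3 = 2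
      · exact ⟨(i - 1) / 2, by omega⟩
      · by_cases h8 : i % 8 = 3
        · exact ⟨(i + 1) / 4, by omega⟩
        · exact ⟨(3 * i - 1) / 4, by omega⟩
  obtain ⟨j, hlt, hj, h⟩ := key
  refine ⟨j, hlt, hj, ?_⟩
  unfold Consecutive
  rcases h with h | h | h | h | h | h
  · exact ⟨i, by simp [iM4], 2 * j, by simp [iM4], Or.inl h⟩
  · exact ⟨i, by simp [iM4], 2 * j, by simp [iM4], Or.inr h⟩
  · exact ⟨i, by simp [iM4], 4 * j, by simp [iM4], Or.inl h⟩
  · exact ⟨i, by simp [iM4], 4 * j, by simp [iM4], Or.inr h⟩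
  · exact ⟨3 * i, by simp [iM4], 4 * j, by simp [iM4], Or.inl h⟩
  · exact ⟨3 * i, by simp [iM4], 4 * j, by simp [iM4], Or.inr h⟩

/-- For every `i ∈ I_{2,3}` there is a strictly decreasing finite
sequence `i = i_0 > i_1 > ⋯ > i_N = 1` in `I_{2,3}` such that `i_k·M_4` and
`i_{k+1}·M_4` are consecutive for each `0 ≤ k < N`. -/
theorem chain_to_one (i : ℕ) (hi : I23 i) :
    ∃ N : ℕ, ∃ f : ℕ → ℕ,
      f 0 = i ∧ f N = 1 ∧
      (∀ k ≤ N, I23 (f k)) ∧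
      (∀ k < N, f (k + 1) < f k) ∧
      (∀ k < N, Consecutive (iM4 (f k)) (iM4 (f (k + 1)))) := by
  induction i using Nat.strong_induction_on with
  | _ i ih =>
    by_cases h1 : i = 1
    · exact ⟨0, fun _ => i, rfl, h1, fun _ _ => hi, by simp, by simp⟩
    · obtain ⟨j, hlt, hj, hc⟩ := exists_smaller_consecutive i hi h1
      obtain ⟨N, g, g0, gN, gI, gd, gc⟩ := ih j hlt hj
      -- Prepend `i` to the chain `g` starting at `j`.
      refine ⟨N + 1, fun n => Nat.casesOn n i g, rfl, gN, ?_, ?_, ?_⟩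
      · rintro (_ | k) hk
        · exact hi
        · exact gI k (by omega)
      · rintro (_ | k) hk
        · simpa [g0] using hlt
        · exact gd k (by omega)
      · rintro (_ | k) hk
        · simpa [g0] using hc
        · exact gc k (by omega)
end
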